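/- arXiv:1902.07871 — 2 statements merged into one kernel-verified Lean document; each statement's English description precedes it below -/
import Mathlib

section
/- There exist X, Y ∈ 2^ℕ and a constant c such that X is Martin-Löf random, Y is not Martin-Löf random, and K(X↾n) + K(Y↾n) ≥ 2n − c for all n, where X↾n denotes the string of the first n bits of X. -/
open MeasureTheory Filter

/-- Cantor space: the space of infinite binary sequences. -/
abbrev Cantor : Type := ℕ → Bool

/-- Finite binary strings. -/
abbrev BStr : Type := List Bool

/-- The cylinder set of sequences extending the string `x`. -/
def cyl (x : BStr) : Set Cantor := {Z | ∀ i : Fin x.length, Z i.1 = x.get i}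

/-- The string of the first `n` bits of `Z`. -/
def seg (Z : Cantor) (n : ℕ) : BStr := List.ofFn fun i : Fin n => Z i.1

/-- `lam` is the uniform (fair-coin product) measure: every cylinder `[x]`
has measure `2^{-|x|}`. -/
def IsUniform (lam : Measure Cantor) : Prop :=
  ∀ x : BStr, lam (cyl x) = (2 : ENNReal)⁻¹ ^ x.length

/-- `(G_m)` is a Martin-Löf test with respect to the measure `ρ`:
the sets `G_m` are uniformly effectively open and `ρ (G_m) ≤ 2^{-m}`. -/
def IsMLTest (ρ : Measure Cantor) (G : ℕ → Set Cantor) : Prop :=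
  (∃ σ : ℕ → ℕ → BStr, Computable₂ σ ∧ ∀ m, G m = ⋃ i, cyl (σ m i)) ∧
  ∀ m, ρ (G m) ≤ (2 : ENNReal)⁻¹ ^ m

/-- `μ` is Martin-Löf absolutely continuous in `ρ`: `inf_m μ(G_m) = 0`
for every `ρ`-Martin-Löf test `(G_m)`. -/
def MLAC (μ ρ : Measure Cantor) : Prop :=
  ∀ G : ℕ → Set Cantor, IsMLTest ρ G → ⨅ m, μ (G m) = 0

/-- `Z` is Martin-Löf random with respect to `lam`. -/
def MLRandom (lam : Measure Cantor) (Z : Cantor) : Prop :=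
  ∀ G : ℕ → Set Cantor, IsMLTest lam G → Z ∉ ⋂ m, G m

/-- `ρ` is a computable measure: `ρ [x]` is a computable real, uniformly in `x`. -/
def ComputableMeasure (ρ : Measure Cantor) : Prop :=
  ∃ q : BStr → ℕ → ℚ, Computable₂ q ∧
    ∀ x k, |(q x k : ℝ) - (ρ (cyl x)).toReal| ≤ (2 : ℝ)⁻¹ ^ k

/-- `U` is a universal plain machine. -/
def UniversalPlain (U : BStr →. BStr) : Prop :=
  Partrec U ∧ ∀ M : BStr →. BStr, Partrec M →
    ∃ c : ℕ, ∀ p x, x ∈ M p → ∃ q : BStr, q.length ≤ p.length + c ∧ x ∈ U q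

/-- The domain of `M` is an antichain under the prefix relation. -/
def PrefixFreeDom (M : BStr →. BStr) : Prop :=
  ∀ p q : BStr, (M p).Dom → (M q).Dom → p <+: q → p = q

/-- `U` is a universal prefix-free machine. -/
def UniversalPrefixFree (U : BStr →. BStr) : Prop :=
  Partrec U ∧ PrefixFreeDom U ∧
  ∀ M : BStr →. BStr, Partrec M → PrefixFreeDom M →
    ∃ c : ℕ, ∀ p x, x ∈ M p → ∃ q : BStr, q.length ≤ p.length + c ∧ x ∈ U q

/-- Kolmogorov complexity of the string `x` with respect to the machine `U`:
the minimal length of a `U`-description of `x`. -/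
noncomputable def cpx (U : BStr →. BStr) (x : BStr) : ℕ :=
  sInf {n | ∃ q : BStr, q.length = n ∧ x ∈ U q}

/-- A natural number `n` identified with the string `0^n`. -/
def numStr (n : ℕ) : BStr := List.replicate n false

/-- Complexity of the natural number `n` (i.e., of the string `0^n`). -/
noncomputable def cpxN (U : BStr →. BStr) (n : ℕ) : ℕ := cpx U (numStr n)

/-- The `μ`-average complexity of the strings of length `n`:
`Σ_{|x|=n} cpx(x) · μ[x]`. -/
noncomputable def avgCpx (U : BStr →. BStr) (μ : Measure Cantor) (n : ℕ) : ℝ :=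
  ∑ v : Fin n → Bool, (cpx U (List.ofFn v) : ℝ) * (μ (cyl (List.ofFn v))).toReal

/-- A measure `μ` is trivial for the complexity given by the machine `U`
(e.g. K-trivial when `U` is the universal prefix-free machine, C-trivial
when `U` is the universal plain machine). -/
def MeasTrivial (U : BStr →. BStr) (μ : Measure Cantor) : Prop :=
  ∃ c : ℝ, ∀ n : ℕ, avgCpx U μ n ≤ (cpxN U n : ℝ) + c


/-! ### Segments and cylinders -/

lemma seg_length (Z : Cantor) (n : ℕ) : (seg Z n).length = n := by simp [seg]

lemma seg_getElem (Z : Cantor) (n i : ℕ) (h : i < (seg Z n).length) : (seg Z n)[i] = Z i := by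
  simp [seg]

lemma mem_cyl_iff (Z : Cantor) (x : BStr) : Z ∈ cyl x ↔ seg Z x.length = x := by
  constructor
  · intro h
    apply List.ext_getElem (seg_length _ _)
    intro i h1 h2
    rw [seg_getElem]
    exact h ⟨i, h2⟩
  · intro h i
    have h2 := seg_getElem Z x.length i.1 (by rw [seg_length]; exact i.2)
    rw [← h2]
    simp [h]

lemma seg_take (Z : Cantor) {m n : ℕ} (h : m ≤ n) : (seg Z n).take m = seg Z m := by
  apply List.ext_getElem
  · simp [seg_length, h]
  · intro i h1 h2
    rw [List.getElem_take, seg_getElem, seg_getElem]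

lemma seg_initial (Z : Cantor) {m n : ℕ} (h : m ≤ n) : seg Z m <+: seg Z n := by
  rw [← seg_take Z h]; exact List.take_prefix _ _

lemma mem_cyl_seg (Z : Cantor) (n : ℕ) : Z ∈ cyl (seg Z n) := by
  rw [mem_cyl_iff, seg_length]

lemma cyl_anti {x y : BStr} (h : x <+: y) : cyl y ⊆ cyl x := by
  intro Z hZ
  rw [mem_cyl_iff] at *
  have h2 := h.length_le
  rw [← seg_take Z h2, hZ]
  exact (List.prefix_iff_eq_take.1 h).symm

lemma prefix_of_mem_cyl {Z : Cantor} {x y : BStr} (hx : Z ∈ cyl x) (hy : Z ∈ cyl y)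
    (h : x.length ≤ y.length) : x <+: y := by
  rw [mem_cyl_iff] at *
  rw [← hx, ← hy]
  exact seg_initial Z h

lemma measurableSet_cyl (x : BStr) : MeasurableSet (cyl x) := by
  have : cyl x = ⋂ i : Fin x.length, (fun Z : Cantor => Z i.1) ⁻¹' {x.get i} := by
    ext Z; simp [cyl]
  rw [this]
  exact MeasurableSet.iInter fun i => (measurable_pi_apply _) (measurableSet_singleton _)

lemma cyl_split (x : BStr) : cyl x = cyl (x ++ [false]) ∪ cyl (x ++ [true]) := by
  apply Set.Subset.antisymm
  · intro Z hZ
    have hs : seg Z (x.length + 1) = x ++ [Z x.length] := by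
      apply List.ext_getElem (by simp [seg_length])
      intro i h1 h2
      rw [seg_getElem]
      rcases Nat.lt_or_ge i x.length with h | h
      · rw [List.getElem_append_left h]; exact hZ ⟨i, h⟩
      · have : i = x.length := by simp at h2; omega
        subst this; simp
    have := mem_cyl_seg Z (x.length + 1)
    rw [hs] at this
    cases hb : Z x.length <;> rw [hb] at this
    · exact Or.inl this
    · exact Or.inr this
  · exact Set.union_subset (cyl_anti (List.prefix_append _ _)) (cyl_anti (List.prefix_append _ _))

lemma cyl_split_disjoint (x : BStr) : Disjoint (cyl (x ++ [false])) (cyl (x ++ [true])) := by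
  rw [Set.disjoint_left]
  intro Z h1 h2
  have := prefix_of_mem_cyl h1 h2 (by simp)
  have := this.eq_of_length (by simp)
  simp at this

lemma cyl_nil : cyl [] = Set.univ := by
  ext Z; simp [cyl]

lemma lam_univ {lam : Measure Cantor} (hlam : IsUniform lam) : lam Set.univ = 1 := by
  rw [← cyl_nil, hlam]; simp

/-- Comparability of strings, in a form that is easy to compute. -/
lemma lam_inter_of_initial {lam : Measure Cantor} (hlam : IsUniform lam) {x y : BStr}
    (h : x <+: y) : lam (cyl x ∩ cyl y) = (2 : ENNReal)⁻¹ ^ y.length := by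
  rw [Set.inter_eq_self_of_subset_right (cyl_anti h), hlam]

lemma two_pow_mul_inv (n : ℕ) : (2 : ENNReal) ^ n * 2⁻¹ ^ n = 1 := by
  rw [← mul_pow, ENNReal.mul_inv_cancel (by simp) (by simp), one_pow]

lemma lam_inter {lam : Measure Cantor} (hlam : IsUniform lam) (x y : BStr) :
    (2 : ENNReal) ^ x.length * 2 ^ y.length * lam (cyl x ∩ cyl y) =
      if x.take y.length = y.take x.length then 2 ^ (min x.length y.length) else 0 := by
  split_ifs with h
  · rcases le_total x.length y.length with hl | hl
    · have hp : x <+: y := by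
        rw [List.take_of_length_le hl] at h
        exact List.prefix_iff_eq_take.2 h
      rw [lam_inter_of_initial hlam hp, min_eq_left hl, mul_assoc, two_pow_mul_inv, mul_one]
    · have hp : y <+: x := by
        rw [List.take_of_length_le hl] at h
        exact List.prefix_iff_eq_take.2 h.symm
      rw [Set.inter_comm, lam_inter_of_initial hlam hp, min_eq_right hl, mul_comm (2 ^ _), mul_assoc,
        two_pow_mul_inv, mul_one]
  · have : cyl x ∩ cyl y = ∅ := by
      rw [Set.eq_empty_iff_forall_notMem]
      rintro Z ⟨hx, hy⟩
      rw [mem_cyl_iff] at hx hy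
      apply h
      rcases le_total x.length y.length with hl | hl
      · rw [List.take_of_length_le hl, ← hy, seg_take Z hl, hx]
      · rw [List.take_of_length_le hl]; conv_lhs => rw [← hx]
        rw [seg_take Z hl, hy]
    simp [this]

/-! ### The universal measure and martingale -/

def Prog (U : BStr →. BStr) : Type := {p : BStr // (U p).Dom}

instance (U : BStr →. BStr) : Countable (Prog U) := inferInstanceAs (Countable {p : BStr // (U p).Dom})

def outp (U : BStr →. BStr) (p : Prog U) : BStr := (U p.1).get p.2

noncomputable def cst (U : BStr →. BStr) (p : Prog U) : ENNReal :=
  2⁻¹ ^ p.1.length * 2 ^ (outp U p).length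

noncomputable def mu (U : BStr →. BStr) (lam : Measure Cantor) : Measure Cantor :=
  Measure.sum fun p : Prog U => cst U p • lam.restrict (cyl (outp U p))

noncomputable def mart (U : BStr →. BStr) (lam : Measure Cantor) (σ : BStr) : ENNReal :=
  2 ^ σ.length * mu U lam (cyl σ)

lemma mu_apply (U : BStr →. BStr) (lam : Measure Cantor) {B : Set Cantor} (hB : MeasurableSet B) :
    mu U lam B = ∑' p : Prog U, cst U p * lam (cyl (outp U p) ∩ B) := by
  rw [mu, Measure.sum_apply _ hB]
  congr 1; ext p
  rw [Measure.smul_apply, Measure.restrict_apply hB, Set.inter_comm, smul_eq_mul]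

lemma kraft {U : BStr →. BStr} (hU : PrefixFreeDom U) {lam : Measure Cantor}
    (hlam : IsUniform lam) : ∑' p : Prog U, (2 : ENNReal)⁻¹ ^ p.1.length ≤ 1 := by
  have h1 : ∀ p : Prog U, (2 : ENNReal)⁻¹ ^ p.1.length = lam (cyl p.1) := fun p => (hlam _).symm
  simp_rw [h1]
  rw [← measure_iUnion, ← lam_univ hlam]
  · exact measure_mono (Set.subset_univ _)
  · intro p q hpq
    rw [Function.onFun, Set.disjoint_left]
    intro Z hp hq
    apply hpq
    apply Subtype.ext
    rcases le_total p.1.length q.1.length with hl | hl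
    · exact hU _ _ p.2 q.2 (prefix_of_mem_cyl hp hq hl)
    · exact (hU _ _ q.2 p.2 (prefix_of_mem_cyl hq hp hl)).symm
  · exact fun p => measurableSet_cyl _

lemma mu_univ {U : BStr →. BStr} (hU : PrefixFreeDom U) {lam : Measure Cantor}
    (hlam : IsUniform lam) : mu U lam Set.univ ≤ 1 := by
  rw [mu_apply _ _ MeasurableSet.univ]
  refine le_trans (le_of_eq ?_) (kraft hU hlam)
  congr 1; ext p
  rw [Set.inter_univ, hlam, cst, mul_assoc, two_pow_mul_inv, mul_one]

lemma mart_nil {U : BStr →. BStr} (hU : PrefixFreeDom U) {lam : Measure Cantor}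
    (hlam : IsUniform lam) : mart U lam [] ≤ 1 := by
  simpa [mart, cyl_nil] using mu_univ hU hlam

lemma mart_split (U : BStr →. BStr) (lam : Measure Cantor) (σ : BStr) :
    mart U lam (σ ++ [false]) + mart U lam (σ ++ [true]) = 2 * mart U lam σ := by
  unfold mart
  rw [cyl_split σ, measure_union (cyl_split_disjoint σ) (measurableSet_cyl _)]
  simp only [List.length_append, List.length_singleton, pow_succ]
  ring

lemma mart_le_two (U : BStr →. BStr) (lam : Measure Cantor) (σ : BStr) (b : Bool) :
    mart U lam (σ ++ [b]) ≤ 2 * mart U lam σ := by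
  rw [← mart_split]
  cases b
  · exact le_self_add
  · exact le_add_self

lemma mart_exists_le (U : BStr →. BStr) (lam : Measure Cantor) (σ : BStr) :
    ∃ b, mart U lam (σ ++ [b]) ≤ mart U lam σ := by
  by_contra! h
  have h1 := ENNReal.add_lt_add (h false) (h true)
  rw [mart_split, two_mul] at h1
  exact lt_irrefl _ h1

lemma mart_eq {U : BStr →. BStr} {lam : Measure Cantor} (hlam : IsUniform lam) (σ : BStr) :
    mart U lam σ = ∑' p : Prog U, (2 : ENNReal)⁻¹ ^ p.1.length *
      (if (outp U p).take σ.length = σ.take (outp U p).length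
        then 2 ^ (min (outp U p).length σ.length) else 0) := by
  rw [mart, mu_apply _ _ (measurableSet_cyl _), ← ENNReal.tsum_mul_left]
  congr 1; ext p
  rw [← lam_inter hlam, cst]
  ring

lemma mart_ge {U : BStr →. BStr} {lam : Measure Cantor} (hlam : IsUniform lam) {σ p : BStr}
    (h : σ ∈ U p) : (2 : ENNReal)⁻¹ ^ p.length * 2 ^ σ.length ≤ mart U lam σ := by
  rw [mart_eq hlam]
  obtain ⟨hd, rfl⟩ := h
  refine le_trans (le_of_eq ?_) (ENNReal.le_tsum (⟨p, hd⟩ : Prog U))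
  simp [outp]

/-- Ville's inequality. -/
lemma ville {U : BStr →. BStr} (hU : PrefixFreeDom U) {lam : Measure Cantor}
    (hlam : IsUniform lam) (m : ℕ) :
    lam (⋃ σ ∈ {σ : BStr | (2 : ENNReal) ^ m < mart U lam σ}, cyl σ) ≤ 2⁻¹ ^ m := by
  set S : Set BStr := {σ : BStr | (2 : ENNReal) ^ m < mart U lam σ} with hS
  let A : Set BStr := {σ | σ ∈ S ∧ ∀ τ, τ <+: σ → τ ∈ S → τ = σ}
  have hA : (⋃ σ ∈ S, cyl σ) ⊆ ⋃ σ : A, cyl σ.1 := by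
    intro Z hZ
    simp only [Set.mem_iUnion] at hZ
    obtain ⟨σ, hσ, hZ⟩ := hZ
    have hex : ∃ n, seg Z n ∈ S := ⟨σ.length, by rw [(mem_cyl_iff _ _).1 hZ]; exact hσ⟩
    classical
    refine Set.mem_iUnion.2 ⟨⟨seg Z (Nat.find hex), Nat.find_spec hex, ?_⟩, mem_cyl_seg _ _⟩
    intro τ hτ hτS
    have hl := hτ.length_le
    rw [seg_length] at hl
    have e : τ = seg Z τ.length := by
      rw [← seg_take Z hl]; exact List.prefix_iff_eq_take.1 hτ
    rw [e] at hτS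
    have := Nat.find_min' hex hτS
    exact hτ.eq_of_length (by rw [seg_length]; omega)
  have hdis : Pairwise (Function.onFun Disjoint fun σ : A => cyl σ.1) := by
    intro σ τ hne
    rw [Function.onFun, Set.disjoint_left]
    intro Z h1 h2
    apply hne
    apply Subtype.ext
    rcases le_total σ.1.length τ.1.length with hl | hl
    · exact τ.2.2 _ (prefix_of_mem_cyl h1 h2 hl) σ.2.1
    · exact (σ.2.2 _ (prefix_of_mem_cyl h2 h1 hl) τ.2.1).symm
  calc lam (⋃ σ ∈ S, cyl σ) ≤ lam (⋃ σ : A, cyl σ.1) := measure_mono hA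
    _ = ∑' σ : A, lam (cyl σ.1) := measure_iUnion hdis fun σ => measurableSet_cyl _
    _ ≤ ∑' σ : A, 2⁻¹ ^ m * mu U lam (cyl σ.1) := by
        refine ENNReal.tsum_le_tsum fun σ => ?_
        have h1 : (2 : ENNReal) ^ m ≤ 2 ^ σ.1.length * mu U lam (cyl σ.1) := le_of_lt σ.2.1
        rw [hlam]
        calc (2 : ENNReal)⁻¹ ^ σ.1.length = 2⁻¹ ^ σ.1.length * (2⁻¹ ^ m * 2 ^ m) := by
              rw [mul_comm (2⁻¹ ^ m), two_pow_mul_inv, mul_one]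
          _ ≤ 2⁻¹ ^ σ.1.length * (2⁻¹ ^ m * (2 ^ σ.1.length * mu U lam (cyl σ.1))) := by gcongr
          _ = (2 ^ σ.1.length * 2⁻¹ ^ σ.1.length) * (2⁻¹ ^ m * mu U lam (cyl σ.1)) := by ring
          _ = _ := by rw [two_pow_mul_inv, one_mul]
    _ = 2⁻¹ ^ m * mu U lam (⋃ σ : A, cyl σ.1) := by
        rw [ENNReal.tsum_mul_left, measure_iUnion hdis fun σ => measurableSet_cyl _]
    _ ≤ 2⁻¹ ^ m * 1 := by
        gcongr
        exact le_trans (measure_mono (Set.subset_univ _)) (mu_univ hU hlam)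
    _ = _ := mul_one _

/-! ### Almost every sequence is random and has large complexity -/

instance countable_comp₂ : Countable {f : ℕ → ℕ → BStr // Computable₂ f} := by
  let F : {f : ℕ → ℕ → BStr // Computable₂ f} → {f : ℕ → ℕ // Computable f} := fun f =>
    ⟨fun n => Encodable.encode (f.1 n.unpair.1 n.unpair.2),
      Computable.encode.comp (f.2.comp (Computable.fst.comp Computable.unpair)
        (Computable.snd.comp Computable.unpair))⟩
  refine Function.Injective.countable (f := F) ?_
  intro f g h
  apply Subtype.ext
  funext m i
  have h2 := congrFun (congrArg Subtype.val h) (Nat.pair m i)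
  simpa [F] using h2

lemma test_null {lam : Measure Cantor} {G : ℕ → Set Cantor} (hG : ∀ m, lam (G m) ≤ 2⁻¹ ^ m) :
    lam (⋂ m, G m) = 0 := by
  have h : Tendsto (fun m : ℕ => (2 : ENNReal)⁻¹ ^ m) atTop (nhds 0) :=
    ENNReal.tendsto_pow_atTop_nhds_zero_of_lt_one (by simp)
  exact le_antisymm (ge_of_tendsto' h fun m => le_trans (measure_mono (Set.iInter_subset _ m)) (hG m))
    (zero_le)

lemma ae_random (lam : Measure Cantor) : ∀ᵐ X ∂lam, MLRandom lam X := by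
  have h : ∀ᵐ X ∂lam, ∀ f : {f : ℕ → ℕ → BStr // Computable₂ f},
      (∀ m, lam (⋃ i, cyl (f.1 m i)) ≤ 2⁻¹ ^ m) → X ∉ ⋂ m, ⋃ i, cyl (f.1 m i) := by
    rw [ae_all_iff]
    intro f
    by_cases hf : ∀ m, lam (⋃ i, cyl (f.1 m i)) ≤ 2⁻¹ ^ m
    · have := measure_eq_zero_iff_ae_notMem.1 (test_null hf)
      filter_upwards [this] with X hX _ using hX
    · exact Eventually.of_forall fun X h => absurd h hf
  filter_upwards [h] with X hX
  rintro G ⟨⟨σ, hσ, hG⟩, hm⟩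
  obtain rfl : G = fun m => ⋃ i, cyl (σ m i) := funext hG
  exact hX ⟨σ, hσ⟩ hm

noncomputable def wsum (U : BStr →. BStr) (X : Cantor) : ENNReal :=
  ∑' p : Prog U, (cyl (outp U p)).indicator (fun _ => cst U p) X

lemma ae_wsum {U : BStr →. BStr} (hU : PrefixFreeDom U) {lam : Measure Cantor}
    (hlam : IsUniform lam) : ∀ᵐ X ∂lam, wsum U X < ⊤ := by
  have hm : ∀ p : Prog U, Measurable fun X => (cyl (outp U p)).indicator (fun _ => cst U p) X :=
    fun p => measurable_const.indicator (measurableSet_cyl _)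
  refine ae_lt_top (Measurable.tsum hm) ?_
  have : ∫⁻ X, wsum U X ∂lam = mu U lam Set.univ := by
    unfold wsum
    rw [lintegral_tsum fun p => (hm p).aemeasurable, mu_apply _ _ MeasurableSet.univ]
    congr 1; ext p
    rw [lintegral_indicator_const (measurableSet_cyl _), Set.inter_univ]
  change ∫⁻ X, wsum U X ∂lam ≠ ⊤
  rw [this]
  exact ne_top_of_le_ne_top ENNReal.one_ne_top (mu_univ hU hlam)

lemma exists_X {U : BStr →. BStr} (hU : PrefixFreeDom U) {lam : Measure Cantor}
    (hlam : IsUniform lam) : ∃ X, MLRandom lam X ∧ wsum U X < ⊤ := by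
  have : NeZero lam := ⟨fun h => by have := lam_univ hlam; simp [h] at this⟩
  exact ((ae_random lam).and (ae_wsum hU hlam)).exists

lemma pow_lt_of_le {a b k : ℕ} (h : a < b + k) : (2 : ENNReal)⁻¹ ^ k ≤ 2⁻¹ ^ a * 2 ^ b := by
  calc (2 : ENNReal)⁻¹ ^ k = 2⁻¹ ^ (b + k) * 2 ^ b := by
        rw [pow_add, mul_right_comm, mul_comm (2⁻¹ ^ b), two_pow_mul_inv, one_mul]
    _ ≤ _ := by
        gcongr ?_ * _
        exact pow_le_pow_of_le_one (zero_le) (by simp) h.le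

lemma wterm {U : BStr →. BStr} {X : Cantor} {n : ℕ} {p : BStr} (hp : seg X n ∈ U p) :
    ∃ P : Prog U, (outp U P).length = n ∧
      (cyl (outp U P)).indicator (fun _ => cst U P) X = 2⁻¹ ^ p.length * 2 ^ n := by
  obtain ⟨hd, he⟩ := hp
  let P : Prog U := ⟨p, hd⟩
  have ho : outp U P = seg X n := he
  have hP : P.1 = p := rfl
  clear_value P
  refine ⟨P, by rw [ho, seg_length], ?_⟩
  rw [Set.indicator_of_mem (by rw [ho]; exact mem_cyl_seg _ _), cst, ho, seg_length, hP]

lemma X_growth {U : BStr →. BStr} {X : Cantor} (h : wsum U X < ⊤) (k : ℕ) :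
    ∃ N, ∀ n, N ≤ n → ∀ p, seg X n ∈ U p → n + k ≤ p.length := by
  have hf := ENNReal.finite_const_le_of_tsum_ne_top (ne_of_lt h)
    (ε := 2⁻¹ ^ k) (by simp)
  obtain ⟨N, hN⟩ := (hf.image fun p => (outp U p).length).bddAbove
  refine ⟨N + 1, fun n hn p hp => ?_⟩
  by_contra! hlt
  obtain ⟨P, hl, hP⟩ := wterm hp
  have : n ≤ N := by
    apply hN
    refine ⟨P, ?_, hl⟩
    change 2⁻¹ ^ k ≤ (cyl (outp U P)).indicator (fun _ => cst U P) X
    rw [hP]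
    exact pow_lt_of_le hlt
  omega

lemma le_of_two_pow_le {a b c : ℕ} (h : (2 : ENNReal)⁻¹ ^ a * 2 ^ b ≤ 2 ^ c) : b ≤ a + c := by
  have h1 : (2 : ENNReal) ^ b ≤ 2 ^ (a + c) := by
    calc (2 : ENNReal) ^ b = (2 ^ a * 2⁻¹ ^ a) * 2 ^ b := by rw [two_pow_mul_inv, one_mul]
      _ = 2 ^ a * (2⁻¹ ^ a * 2 ^ b) := by ring
      _ ≤ 2 ^ a * 2 ^ c := by gcongr
      _ = _ := (pow_add _ _ _).symm
  have h2 : (2 : ℕ) ^ b ≤ 2 ^ (a + c) := by exact_mod_cast h1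
  exact (Nat.pow_le_pow_iff_right (by norm_num)).1 h2

lemma exists_le_two_pow {a : ENNReal} (h : a < ⊤) : ∃ c : ℕ, a ≤ 2 ^ c := by
  obtain ⟨n, hn⟩ := ENNReal.exists_nat_gt h.ne
  refine ⟨n, hn.le.trans ?_⟩
  exact_mod_cast (Nat.lt_two_pow_self (n := n)).le

lemma X_bound {U : BStr →. BStr} {X : Cantor} (h : wsum U X < ⊤) :
    ∃ c, ∀ n p, seg X n ∈ U p → n ≤ p.length + c := by
  obtain ⟨c, hc⟩ := exists_le_two_pow h
  refine ⟨c, fun n p hp => ?_⟩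
  obtain ⟨P, hl, hP⟩ := wterm hp
  apply le_of_two_pow_le
  refine le_trans ?_ hc
  rw [← hP]
  exact ENNReal.le_tsum P

/-! ### Consequences of universality -/

def unary (σ p : BStr) : Option BStr :=
  if p = (List.range (p.length - 1)).map (fun _ => true) ++ [false]
  then some (σ ++ (List.range (2 * p.length)).map (fun _ => false)) else none

lemma unary_primrec (σ : BStr) : Primrec (unary σ) := by
  unfold unary
  have hl : Primrec fun p : BStr => p.length := Primrec.list_length
  refine Primrec.ite ?_ (Primrec.option_some.comp ?_) (Primrec.const none)
  · refine Primrec.eq.comp Primrec.id (Primrec.list_append.comp ?_ (Primrec.const _))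
    exact Primrec.list_map (Primrec.list_range.comp (Primrec.nat_sub.comp hl (Primrec.const 1)))
      (Primrec.const true).to₂
  · refine Primrec.list_append.comp (Primrec.const σ) ?_
    exact Primrec.list_map (Primrec.list_range.comp (Primrec.nat_mul.comp (Primrec.const 2) hl))
      (Primrec.const false).to₂

lemma unary_dom {σ p : BStr} (h : (unary σ p).isSome) :
    p = List.replicate (p.length - 1) true ++ [false] := by
  unfold unary at h
  split_ifs at h with h1
  · simpa [List.map_const'] using h1
  · simp at h

lemma unary_eq (σ : BStr) (n : ℕ) : unary σ (List.replicate n true ++ [false]) =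
    some (σ ++ List.replicate (2 * (n + 1)) false) := by
  simp [unary, List.map_const']

lemma unary_univ {U : BStr →. BStr} (hU : UniversalPrefixFree U) (σ : BStr) :
    ∃ c, ∀ n, ∃ q : BStr, q.length ≤ n + 1 + c ∧ (σ ++ List.replicate (2 * (n + 1)) false) ∈ U q := by
  obtain ⟨c, hc⟩ := hU.2.2 (fun p => (unary σ p : Part BStr))
    (unary_primrec σ).to_comp.ofOption (by
      intro p q hp hq hpq
      have hp' := unary_dom (σ := σ) (p := p) (by simpa using hp)
      have hq' := unary_dom (σ := σ) (p := q) (by simpa using hq)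
      by_contra hne
      have hl : p.length < q.length := by
        rcases hpq.length_le.lt_or_eq with h | h
        · exact h
        · exact absurd (hpq.eq_of_length h) hne
      have h0 : 0 < p.length := by rw [hp']; simp
      have e1 : p[p.length - 1]'(by omega) = false := by
        rw [List.getElem_of_eq hp', List.getElem_append_right (by simp)]; simp
      have e2 : q[p.length - 1]'(by omega) = true := by
        rw [List.getElem_of_eq hq', List.getElem_append_left (by simp; omega)]; simp
      rw [hpq.getElem (by omega), e2] at e1
      simp at e1)
  refine ⟨c, fun n => ?_⟩
  obtain ⟨q, hq, hx⟩ := hc (List.replicate n true ++ [false])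
    (σ ++ List.replicate (2 * (n + 1)) false) (by simp [unary_eq])
  exact ⟨q, by simpa using hq, hx⟩

def emitOnce (σ p : BStr) : Option BStr := if p = [] then some σ else none

lemma cpx_attained {U : BStr →. BStr} (hU : UniversalPrefixFree U) (x : BStr) :
    ∃ q : BStr, q.length = cpx U x ∧ x ∈ U q := by
  have hne : {n | ∃ q : BStr, q.length = n ∧ x ∈ U q}.Nonempty := by
    obtain ⟨c, hc⟩ := hU.2.2 (fun p => (emitOnce x p : Part BStr))
      (Computable.ofOption (Primrec.to_comp (Primrec.ite (Primrec.eq.comp Primrec.id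
        (Primrec.const [])) (Primrec.const (some x)) (Primrec.const none)))) (by
        intro p q hp hq _
        have h1 : ∀ p, ((emitOnce x p : Option BStr) : Part BStr).Dom → p = [] := by
          intro p hp
          by_contra h
          simp [emitOnce, h] at hp
        rw [h1 p hp, h1 q hq])
    obtain ⟨q, -, hq⟩ := hc [] x (by simp [emitOnce])
    exact ⟨_, q, rfl, hq⟩
  exact Nat.sInf_mem hne

lemma mart_unbounded {U : BStr →. BStr} (hU : UniversalPrefixFree U) {lam : Measure Cantor}
    (hlam : IsUniform lam) (σ : BStr) (k : ℕ) :
    ∃ j, (2 : ENNReal) ^ k < mart U lam (σ ++ List.replicate j false) := by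
  obtain ⟨c, hc⟩ := unary_univ hU σ
  obtain ⟨q, hq, hx⟩ := hc (k + c + 1)
  refine ⟨2 * (k + c + 1 + 1), lt_of_not_ge fun hle => ?_⟩
  have := le_of_two_pow_le ((mart_ge hlam hx).trans hle)
  simp at this
  omega

/-! ### Effectivity of the martingale test -/

open Nat.Partrec in
def sval (c : Code) (s n : ℕ) : Option BStr :=
  (Code.evaln s c n).bind (Encodable.decode (α := BStr))

def scond (σ : BStr) (s n : ℕ) (p x : BStr) : ℕ :=
  if Encodable.encode p = n ∧ x.take σ.length = σ.take x.length
  then 2 ^ (s - p.length + min x.length σ.length) else 0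

open Nat.Partrec in
def sterm (c : Code) (σ : BStr) (s n : ℕ) : ℕ :=
  ((Encodable.decode (α := BStr) n).bind fun p => (sval c s n).map fun x => scond σ s n p x).getD 0

open Nat.Partrec in
def ssum (c : Code) (σ : BStr) (s j : ℕ) : ℕ :=
  Nat.rec 0 (fun n acc => acc + sterm c σ s n) j

lemma primrec_two_pow : Primrec fun n : ℕ => 2 ^ n := by
  refine (Primrec.nat_rec₁ (f := fun _ a => 2 * a) 1
    (Primrec.nat_mul.comp (Primrec.const 2) Primrec.snd).to₂).of_eq ?_
  intro n
  induction n with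
  | zero => rfl
  | succ n ih => rw [pow_succ, ← ih]; simp [mul_comm]

lemma primrec_scond : Primrec fun a : ((BStr × ℕ) × ℕ) × (BStr × BStr) =>
    scond a.1.1.1 a.1.1.2 a.1.2 a.2.1 a.2.2 := by
  unfold scond
  have hσ : Primrec fun a : ((BStr × ℕ) × ℕ) × (BStr × BStr) => a.1.1.1 :=
    Primrec.fst.comp (Primrec.fst.comp Primrec.fst)
  have hs : Primrec fun a : ((BStr × ℕ) × ℕ) × (BStr × BStr) => a.1.1.2 :=
    Primrec.snd.comp (Primrec.fst.comp Primrec.fst)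
  have hn : Primrec fun a : ((BStr × ℕ) × ℕ) × (BStr × BStr) => a.1.2 :=
    Primrec.snd.comp Primrec.fst
  have hp : Primrec fun a : ((BStr × ℕ) × ℕ) × (BStr × BStr) => a.2.1 :=
    Primrec.fst.comp Primrec.snd
  have hx : Primrec fun a : ((BStr × ℕ) × ℕ) × (BStr × BStr) => a.2.2 :=
    Primrec.snd.comp Primrec.snd
  have hlσ := Primrec.list_length.comp hσ
  have hlx := Primrec.list_length.comp hx
  have hlp := Primrec.list_length.comp hp
  refine Primrec.ite (PrimrecPred.and ?_ ?_) ?_ (Primrec.const 0)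
  · exact Primrec.eq.comp (Primrec.encode.comp hp) hn
  · exact Primrec.eq.comp (Primrec.list_take.comp hlσ hx) (Primrec.list_take.comp hlx hσ)
  · exact primrec_two_pow.comp (Primrec.nat_add.comp (Primrec.nat_sub.comp hs hlp)
      (Primrec.nat_min.comp hlx hlσ))

open Nat.Partrec in
lemma primrec_sterm (c : Code) : Primrec fun a : (BStr × ℕ) × ℕ => sterm c a.1.1 a.1.2 a.2 := by
  unfold sterm
  refine Primrec.option_getD.comp ?_ (Primrec.const 0)
  refine Primrec.option_bind ((Primrec.decode (α := BStr)).comp Primrec.snd) ?_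
  unfold Primrec₂
  refine Primrec.option_map ?_ ?_
  · unfold sval
    refine Primrec.option_bind ?_ ((Primrec.decode (α := BStr)).comp Primrec.snd).to₂
    have h1 : Primrec fun a : ((BStr × ℕ) × ℕ) × BStr => ((a.1.1.2, c), a.1.2) :=
      Primrec.pair (Primrec.pair (Primrec.snd.comp (Primrec.fst.comp Primrec.fst))
        (Primrec.const c)) (Primrec.snd.comp Primrec.fst)
    exact Code.primrec_evaln.comp h1
  · have h2 : Primrec fun b : (((BStr × ℕ) × ℕ) × BStr) × BStr => (b.1.1, (b.1.2, b.2)) :=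
      Primrec.pair (Primrec.fst.comp Primrec.fst)
        (Primrec.pair (Primrec.snd.comp Primrec.fst) Primrec.snd)
    exact (primrec_scond.comp h2).to₂

open Nat.Partrec in
lemma primrec_ssum (c : Code) : Primrec fun a : BStr × ℕ => ssum c a.1 a.2 a.2 := by
  have h : Primrec fun a : (BStr × ℕ) × (ℕ × ℕ) => (a.1, a.2.1) :=
    Primrec.pair Primrec.fst (Primrec.fst.comp Primrec.snd)
  have hg : Primrec₂ fun (a : BStr × ℕ) (b : ℕ × ℕ) => b.2 + sterm c a.1 a.2 b.1 :=
    (Primrec.nat_add.comp (Primrec.snd.comp Primrec.snd) ((primrec_sterm c).comp h)).to₂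
  exact (Primrec.nat_rec' (f := fun a : BStr × ℕ => a.2) (g := fun _ => 0)
    Primrec.snd (Primrec.const 0) hg).of_eq fun a => rfl

open Nat.Partrec in
lemma ssum_eq (c : Code) (σ : BStr) (s j : ℕ) :
    ssum c σ s j = ∑ n ∈ Finset.range j, sterm c σ s n := by
  induction j with
  | zero => rfl
  | succ j ih => rw [Finset.sum_range_succ, ← ih]; rfl

noncomputable def contrib (U : BStr →. BStr) (σ : BStr) (p : Prog U) : ENNReal :=
  (2 : ENNReal)⁻¹ ^ p.1.length *
      (if (outp U p).take σ.length = σ.take (outp U p).length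
        then 2 ^ (min (outp U p).length σ.length) else 0)

/-- `c` is a code for the machine `U`. -/
def CodeFor (c : Nat.Partrec.Code) (U : BStr →. BStr) : Prop :=
  ∀ p : BStr, c.eval (Encodable.encode p) = (U p).map Encodable.encode

lemma exists_codeFor {U : BStr →. BStr} (hU : Partrec U) : ∃ c, CodeFor c U := by
  obtain ⟨c, hc⟩ := Nat.Partrec.Code.exists_code.1 hU
  refine ⟨c, fun p => ?_⟩
  rw [hc]; simp

lemma sterm_eq {c : Nat.Partrec.Code} {U : BStr →. BStr} {σ : BStr} {s : ℕ} {P : Prog U}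
    (h : Encodable.encode (outp U P) ∈ c.evaln s (Encodable.encode P.1)) :
    (sterm c σ s (Encodable.encode P.1) : ENNReal) = 2 ^ s * contrib U σ P := by
  have hs : P.1.length ≤ s :=
    (Encodable.length_le_encode _).trans (Nat.Partrec.Code.evaln_bound h).le
  have hv : sval c s (Encodable.encode P.1) = some (outp U P) := by
    unfold sval
    rw [Option.mem_def.1 h]; simp
  unfold sterm contrib
  rw [hv]
  simp only [Encodable.encodek, Option.bind_some, Option.map_some, Option.getD_some, scond,
    true_and]
  split_ifs with h1
  · push_cast
    obtain ⟨d, hd⟩ := Nat.exists_eq_add_of_le hs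
    rw [hd, Nat.add_sub_cancel_left, pow_add, pow_add]
    calc (2 : ENNReal) ^ d * 2 ^ min (outp U P).length σ.length
        = (2 ^ P.1.length * 2⁻¹ ^ P.1.length) * (2 ^ d * 2 ^ min (outp U P).length σ.length) := by
          rw [two_pow_mul_inv, one_mul]
      _ = _ := by ring
  · simp

lemma sterm_le {c : Nat.Partrec.Code} {U : BStr →. BStr} (hc : CodeFor c U) (σ : BStr) (s n : ℕ) :
    (sterm c σ s n : ENNReal) ≤
      2 ^ s * ∑' P : Prog U, if Encodable.encode P.1 = n then contrib U σ P else 0 := by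
  by_cases h0 : sterm c σ s n = 0
  · simp [h0]
  have : ∃ P : Prog U, Encodable.encode P.1 = n ∧
      Encodable.encode (outp U P) ∈ c.evaln s (Encodable.encode P.1) := by
    cases hp : Encodable.decode (α := BStr) n with
    | none => simp [sterm, hp] at h0
    | some p =>
      cases hy : c.evaln s n with
      | none => simp [sterm, sval, hy] at h0
      | some y =>
        cases hx : Encodable.decode (α := BStr) y with
        | none => simp [sterm, sval, hy, hx] at h0
        | some x =>
          have hn : Encodable.encode p = n := by
            by_contra h
            simp [sterm, sval, hy, hx, hp, scond, h] at h0
          have h1 := Nat.Partrec.Code.evaln_sound (Option.mem_def.2 hy)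
          rw [← hn, hc p] at h1
          obtain ⟨x', ⟨hd, hx'⟩, hy'⟩ := (Part.mem_map_iff _).1 h1
          refine ⟨⟨p, hd⟩, hn, ?_⟩
          have h2 : Encodable.encode (outp U ⟨p, hd⟩) = y := by
            rw [← hy', ← hx']; rfl
          rw [h2]
          change y ∈ c.evaln s (Encodable.encode p)
          rw [hn]; exact hy
  obtain ⟨P, rfl, hP⟩ := this
  rw [sterm_eq hP]
  gcongr
  refine le_trans ?_ (ENNReal.le_tsum P)
  simp

lemma ssum_sound {c : Nat.Partrec.Code} {U : BStr →. BStr} (hc : CodeFor c U)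
    {lam : Measure Cantor} (hlam : IsUniform lam) (σ : BStr) (s j : ℕ) :
    (ssum c σ s j : ENNReal) ≤ 2 ^ s * mart U lam σ := by
  rw [ssum_eq, Nat.cast_sum]
  calc _ ≤ ∑ n ∈ Finset.range j,
        2 ^ s * ∑' P : Prog U, (if Encodable.encode P.1 = n then contrib U σ P else 0) :=
        Finset.sum_le_sum fun n _ => sterm_le hc σ s n
    _ = 2 ^ s * ∑' P : Prog U, ∑ n ∈ Finset.range j,
          (if Encodable.encode P.1 = n then contrib U σ P else 0) := by
        rw [← Finset.mul_sum, Summable.tsum_finsetSum fun _ _ => ENNReal.summable]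
    _ ≤ 2 ^ s * ∑' P : Prog U, contrib U σ P := by
        gcongr with P
        rw [Finset.sum_ite_eq]
        split_ifs <;> simp
    _ = _ := by rw [mart_eq hlam]; rfl

lemma ssum_complete {c : Nat.Partrec.Code} {U : BStr →. BStr} (hc : CodeFor c U)
    {lam : Measure Cantor} (hlam : IsUniform lam) {σ : BStr} {m : ℕ}
    (h : (2 : ENNReal) ^ m < mart U lam σ) : ∃ s, 2 ^ (m + s) < ssum c σ s s := by
  classical
  have h' : (2 : ENNReal) ^ m < ∑' P : Prog U, contrib U σ P := by
    rw [mart_eq hlam] at h; exact h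
  rw [ENNReal.tsum_eq_iSup_sum, lt_iSup_iff] at h'
  obtain ⟨A, hA⟩ := h'
  have hst : ∀ P : Prog U, ∃ k, Encodable.encode (outp U P) ∈
      c.evaln k (Encodable.encode P.1) := by
    intro P
    rw [← Nat.Partrec.Code.evaln_complete, hc]
    exact Part.mem_map _ (Part.get_mem P.2)
  choose st hst using hst
  let s := A.sup st
  have hs : ∀ P ∈ A, Encodable.encode (outp U P) ∈ c.evaln s (Encodable.encode P.1) :=
    fun P hP => Nat.Partrec.Code.evaln_mono (Finset.le_sup hP) (hst P)
  refine ⟨s, ?_⟩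
  have hinj : Set.InjOn (fun P : Prog U => Encodable.encode P.1) A := by
    intro P _ Q _ hPQ
    exact Subtype.ext (Encodable.encode_injective hPQ)
  have h1 : ∑ P ∈ A, sterm c σ s (Encodable.encode P.1) ≤ ssum c σ s s := by
    rw [ssum_eq, ← Finset.sum_image (f := fun n => sterm c σ s n) hinj]
    apply Finset.sum_le_sum_of_subset
    intro n hn
    obtain ⟨P, hP, rfl⟩ := Finset.mem_image.1 hn
    exact Finset.mem_range.2 (Nat.Partrec.Code.evaln_bound (hs P hP))
  refine lt_of_lt_of_le ?_ h1
  have h2 : ((2 ^ (m + s) : ℕ) : ENNReal) <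
      ((∑ P ∈ A, sterm c σ s (Encodable.encode P.1) : ℕ) : ENNReal) := by
    push_cast
    rw [Finset.sum_congr rfl fun P hP => sterm_eq (σ := σ) (hs P hP), ← Finset.mul_sum, pow_add,
      mul_comm]
    exact ENNReal.mul_lt_mul_right (by simp) (by simp) hA
  exact_mod_cast h2

lemma computable_find {T : ℕ → ℕ → Bool} (hT : Computable₂ T) (hex : ∀ m, ∃ i, T m i = true) :
    Computable fun m => Nat.find (hex m) := by
  have h : Partrec₂ fun m i => (Part.some (T m i) : Part Bool) := hT
  refine (Partrec.rfind h).of_eq ?_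
  intro m
  refine Part.eq_some_iff.2 ?_
  refine Nat.mem_rfind.2 ⟨by simp [Nat.find_spec (hex m)], ?_⟩
  intro j hj
  have := Nat.find_min (hex m) hj
  simpa using this

lemma test_effective {U : BStr →. BStr} (hU : Partrec U) {lam : Measure Cantor}
    (hlam : IsUniform lam) (hne : ∀ m : ℕ, ∃ σ, (2 : ENNReal) ^ m < mart U lam σ) :
    ∃ e : ℕ → ℕ → BStr, Computable₂ e ∧ ∀ m : ℕ,
      (⋃ σ ∈ {σ : BStr | (2 : ENNReal) ^ m < mart U lam σ}, cyl σ) = ⋃ i, cyl (e m i) := by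
  obtain ⟨c, hc⟩ := exists_codeFor hU
  let str : ℕ → BStr := fun i => (Encodable.decode (α := BStr) i.unpair.1).getD []
  let T : ℕ → ℕ → Bool := fun m i =>
    decide (2 ^ (m + i.unpair.2) < ssum c (str i) i.unpair.2 i.unpair.2)
  have hstr : Primrec str := Primrec.option_getD.comp
    (Primrec.decode.comp (Primrec.fst.comp Primrec.unpair)) (Primrec.const [])
  have h2 : Primrec fun a : ℕ × ℕ => a.2.unpair.2 :=
    Primrec.snd.comp (Primrec.unpair.comp Primrec.snd)
  have hT : Primrec fun a : ℕ × ℕ => T a.1 a.2 := by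
    refine PrimrecPred.decide (Primrec.nat_lt.comp ?_ ?_)
    · exact primrec_two_pow.comp (Primrec.nat_add.comp Primrec.fst h2)
    · have h3 : Primrec fun a : ℕ × ℕ => (str a.2, a.2.unpair.2) :=
        Primrec.pair (hstr.comp Primrec.snd) h2
      exact (primrec_ssum c).comp h3
  have hTc : Computable₂ T := hT.to_comp
  have hsound : ∀ m i, T m i = true → (2 : ENNReal) ^ m < mart U lam (str i) := by
    intro m i h
    have h1 : 2 ^ (m + i.unpair.2) < ssum c (str i) i.unpair.2 i.unpair.2 := of_decide_eq_true h
    have h2 : ((2 ^ (m + i.unpair.2) : ℕ) : ENNReal) < _ :=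
      lt_of_lt_of_le (Nat.cast_lt.2 h1) (ssum_sound hc hlam (str i) i.unpair.2 i.unpair.2)
    push_cast at h2
    rw [pow_add, mul_comm] at h2
    exact lt_of_mul_lt_mul_left' h2
  have hcomplete : ∀ m σ, (2 : ENNReal) ^ m < mart U lam σ → ∃ i, T m i = true ∧ str i = σ := by
    intro m σ h
    obtain ⟨s, hs⟩ := ssum_complete hc hlam h
    have e : str (Nat.pair (Encodable.encode σ) s) = σ := by simp [str]
    refine ⟨Nat.pair (Encodable.encode σ) s, ?_, e⟩
    simp only [T, e, Nat.unpair_pair]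
    exact decide_eq_true hs
  have hex : ∀ m, ∃ i, T m i = true := fun m => by
    obtain ⟨σ, hσ⟩ := hne m
    obtain ⟨i, hi, -⟩ := hcomplete m σ hσ
    exact ⟨i, hi⟩
  refine ⟨fun m i => bif T m i then str i else str (Nat.find (hex m)), ?_, ?_⟩
  · refine Computable.cond hTc (hstr.to_comp.comp Computable.snd) ?_
    exact hstr.to_comp.comp ((computable_find hTc hex).comp Computable.fst)
  · intro m
    apply Set.Subset.antisymm
    · intro Z hZ
      simp only [Set.mem_iUnion] at hZ
      obtain ⟨σ, hσ, hZ⟩ := hZ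
      obtain ⟨i, hi, rfl⟩ := hcomplete m σ hσ
      refine Set.mem_iUnion.2 ⟨i, ?_⟩
      simpa [hi] using hZ
    · intro Z hZ
      obtain ⟨i, hZ⟩ := Set.mem_iUnion.1 hZ
      simp only [Set.mem_iUnion]
      cases hi : T m i with
      | true =>
        simp only [hi, cond_true, cond_false] at hZ
        exact ⟨str i, hsound m i hi, hZ⟩
      | false =>
        simp only [hi, cond_true, cond_false] at hZ
        exact ⟨str (Nat.find (hex m)), hsound m _ (Nat.find_spec (hex m)), hZ⟩

lemma not_random {U : BStr →. BStr} (hU : UniversalPrefixFree U) {lam : Measure Cantor}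
    (hlam : IsUniform lam) {Y : Cantor} (hY : ∀ m : ℕ, ∃ n, (2 : ENNReal) ^ m < mart U lam (seg Y n)) :
    ¬ MLRandom lam Y := by
  intro h
  obtain ⟨e, he, hS⟩ := test_effective hU.1 hlam fun m => (hY m).imp' _ fun _ h => h
  refine h (fun m => ⋃ i, cyl (e m i)) ⟨⟨e, he, fun _ => rfl⟩, fun m => ?_⟩ ?_
  · change lam (⋃ i, cyl (e m i)) ≤ _
    rw [← hS]; exact ville hU.2.1 hlam m
  · refine Set.mem_iInter.2 fun m => ?_
    change Y ∈ ⋃ i, cyl (e m i)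
    rw [← hS]
    obtain ⟨n, hn⟩ := hY m
    simp only [Set.mem_iUnion]
    exact ⟨_, hn, mem_cyl_seg Y n⟩

/-! ### Construction of the nonrandom sequence -/

lemma prefix_concat_cases {ρ τ : BStr} {b : Bool} (h : ρ <+: τ ++ [b]) :
    ρ = τ ++ [b] ∨ ρ <+: τ := by
  rcases List.prefix_concat_iff.1 h with h | h
  · exact Or.inl h
  · exact Or.inr h

/-- Extend without increasing the martingale. -/
lemma extend_le (U : BStr →. BStr) (lam : Measure Cantor) (σ : BStr) (d : ℕ) :
    ∃ τ, σ <+: τ ∧ τ.length = σ.length + d ∧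
      ∀ ρ, ρ <+: τ → σ.length ≤ ρ.length → mart U lam ρ ≤ mart U lam σ := by
  induction d with
  | zero =>
    refine ⟨σ, List.prefix_rfl, rfl, fun ρ h hl => ?_⟩
    rw [h.eq_of_length (le_antisymm h.length_le hl)]
  | succ d ih =>
    obtain ⟨τ, h1, h2, h3⟩ := ih
    obtain ⟨b, hb⟩ := mart_exists_le U lam τ
    refine ⟨τ ++ [b], h1.trans (List.prefix_append _ _), by simp [h2]; omega, ?_⟩
    intro ρ hρ hl
    rcases prefix_concat_cases hρ with rfl | h
    · exact hb.trans (h3 τ List.prefix_rfl (by omega))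
    · exact h3 ρ h hl

lemma climb_aux (U : BStr →. BStr) (lam : Measure Cantor) {σ : BStr} {C : ENNReal} (j : ℕ)
    (h : ∀ i ≤ j, mart U lam (σ ++ List.replicate i false) ≤ C) (ρ : BStr)
    (hρ : ρ <+: σ ++ List.replicate j false) (hl : σ.length ≤ ρ.length) : mart U lam ρ ≤ C := by
  induction j with
  | zero =>
    have := h 0 le_rfl
    simp at this hρ
    rwa [hρ.eq_of_length (le_antisymm hρ.length_le hl)]
  | succ j ih =>
    rw [List.replicate_succ', ← List.append_assoc] at hρ
    rcases prefix_concat_cases hρ with rfl | h'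
    · rw [List.append_assoc, ← List.replicate_succ']; exact h _ le_rfl
    · exact ih (fun i hi => h i (by omega)) h'

/-- Raise the martingale above `2 ^ k` without exceeding `2 ^ (k + 1)`. -/
lemma climb {U : BStr →. BStr} (hU : UniversalPrefixFree U) {lam : Measure Cantor}
    (hlam : IsUniform lam) (σ : BStr) (k : ℕ) (hσ : mart U lam σ ≤ 2 ^ (k + 1)) :
    ∃ τ, σ <+: τ ∧ 2 ^ k < mart U lam τ ∧
      ∀ ρ, ρ <+: τ → σ.length ≤ ρ.length → mart U lam ρ ≤ 2 ^ (k + 1) := by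
  classical
  have hex := mart_unbounded hU hlam σ k
  have hle : ∀ i ≤ Nat.find hex, mart U lam (σ ++ List.replicate i false) ≤ 2 ^ (k + 1) := by
    intro i hi
    cases i with
    | zero => simpa using hσ
    | succ i =>
      have h1 : mart U lam (σ ++ List.replicate i false) ≤ 2 ^ k :=
        not_lt.1 (Nat.find_min hex (by omega))
      rw [List.replicate_succ', ← List.append_assoc, pow_succ, mul_comm]
      refine (mart_le_two U lam _ _).trans ?_
      gcongr
  exact ⟨σ ++ List.replicate (Nat.find hex) false, List.prefix_append _ _, Nat.find_spec hex,
    fun ρ => climb_aux U lam _ hle ρ⟩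

/-- One stage of the construction. -/
lemma stage {U : BStr →. BStr} (hU : UniversalPrefixFree U) {lam : Measure Cantor}
    (hlam : IsUniform lam) (k N : ℕ) (σ : BStr) (hσ : mart U lam σ ≤ 2 ^ (k + 1)) :
    ∃ τ, σ <+: τ ∧ N ≤ τ.length ∧ mart U lam τ ≤ 2 ^ (k + 1 + 1) ∧
      (∃ ρ, ρ <+: τ ∧ 2 ^ k < mart U lam ρ) ∧
      ∀ ρ, ρ <+: τ → σ.length ≤ ρ.length → mart U lam ρ ≤ 2 ^ (k + 1) := by
  obtain ⟨τ, h1, h2, h3⟩ := climb hU hlam σ k hσ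
  obtain ⟨υ, g1, g2, g3⟩ := extend_le U lam τ N
  have hτ := h3 τ List.prefix_rfl h1.length_le
  refine ⟨υ, h1.trans g1, by omega, ?_, ⟨τ, g1, h2⟩, ?_⟩
  · refine ((g3 υ List.prefix_rfl g1.length_le).trans hτ).trans ?_
    exact pow_le_pow_right₀ (by norm_num) (by omega)
  · intro ρ hρ hl
    rcases le_total τ.length ρ.length with h | h
    · exact (g3 ρ hρ h).trans hτ
    · exact h3 ρ (List.prefix_of_prefix_length_le hρ g1 h) hl

lemma chain_limit (s : ℕ → BStr) (hs : ∀ k, s k <+: s (k + 1)) (hl : ∀ k, k ≤ (s k).length) :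
    ∃ Y : Cantor, ∀ k ρ, ρ <+: s k → seg Y ρ.length = ρ := by
  have hmono : ∀ i j, i ≤ j → s i <+: s j := by
    intro i j hij
    induction j, hij using Nat.le_induction with
    | base => exact List.prefix_rfl
    | succ j _ ih => exact ih.trans (hs j)
  refine ⟨fun i => (s (i + 1))[i]'(hl (i + 1)), fun k ρ hρ => ?_⟩
  apply List.ext_getElem (seg_length _ _)
  intro i h1 h2
  rw [seg_getElem, hρ.getElem h2]
  rcases le_total (i + 1) k with h | h
  · exact (hmono _ _ h).getElem _
  · exact ((hmono _ _ h).getElem _).symm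

lemma exists_Y {U : BStr →. BStr} (hU : UniversalPrefixFree U) {lam : Measure Cantor}
    (hlam : IsUniform lam) (N : ℕ → ℕ) (hN0 : N 0 = 0) :
    ∃ Y : Cantor, (∀ m : ℕ, ∃ n, (2 : ENNReal) ^ m < mart U lam (seg Y n)) ∧
      ∀ n, ∃ k, N k ≤ n ∧ mart U lam (seg Y n) ≤ 2 ^ (k + 1) := by
  choose f hf using fun (k N : ℕ) (σ : BStr) (hσ : mart U lam σ ≤ 2 ^ (k + 1)) =>
    stage hU hlam k N σ hσ
  let s : ∀ k : ℕ, {σ : BStr // mart U lam σ ≤ 2 ^ (k + 1)} := fun k =>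
    Nat.rec ⟨[], (mart_nil hU.2.1 hlam).trans (by norm_num)⟩
      (fun k σ => ⟨f k (max (N (k + 1)) (k + 1)) σ.1 σ.2, (hf k _ σ.1 σ.2).2.2.1⟩) k
  have h0 : (s 0).1 = [] := rfl
  have hS : ∀ k, (s (k + 1)).1 = f k (max (N (k + 1)) (k + 1)) (s k).1 (s k).2 := fun k => rfl
  clear_value s
  have hpre : ∀ k, (s k).1 <+: (s (k + 1)).1 := fun k => by
    rw [hS]; exact (hf k _ _ (s k).2).1
  have hlen : ∀ k, max (N k) k ≤ (s k).1.length := fun k => by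
    cases k with
    | zero => simp [hN0]
    | succ k => rw [hS]; exact (hf k _ _ (s k).2).2.1
  obtain ⟨Y, hY⟩ := chain_limit (fun k => (s k).1) hpre fun k => (le_max_right _ _).trans (hlen k)
  refine ⟨Y, fun m => ?_, fun n => ?_⟩
  · obtain ⟨ρ, h1, h2⟩ := (hf m (max (N (m + 1)) (m + 1)) _ (s m).2).2.2.2.1
    rw [← hS] at h1
    refine ⟨ρ.length, ?_⟩
    rw [hY (m + 1) ρ h1]; exact h2
  · classical
    have hex : ∃ k, n < (s (k + 1)).1.length :=
      ⟨n, by have := hlen (n + 1); have := le_max_right (N (n + 1)) (n + 1); omega⟩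
    let k := Nat.find hex
    have hk1 : n < (s (k + 1)).1.length := Nat.find_spec hex
    have hk0 : (s k).1.length ≤ n := by
      rcases Nat.eq_zero_or_pos k with h | h
      · rw [h, h0]; simp
      · obtain ⟨j, hj⟩ := Nat.exists_eq_succ_of_ne_zero h.ne'
        have := Nat.find_min hex (m := j) (by change j < k; omega)
        rw [hj]; exact not_lt.1 this
    refine ⟨k, (le_max_left _ _).trans ((hlen k).trans hk0), ?_⟩
    have hseg : seg Y n <+: (s (k + 1)).1 := by
      rw [← hY (k + 1) _ List.prefix_rfl]
      exact seg_initial Y hk1.le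
    rw [hS] at hseg
    exact (hf k _ _ (s k).2).2.2.2.2 _ hseg (by rw [seg_length]; exact hk0)

/-- There are `X, Y ∈ 2^ℕ` and a constant `c` such that `X` is
Martin-Löf random, `Y` is not Martin-Löf random, and
`K(X↾n) + K(Y↾n) ≥ 2n - c` for all `n`. -/
theorem exists_random_nonrandom_pair_with_large_complexity_sum
    (UK : BStr →. BStr) (hUK : UniversalPrefixFree UK)
    (lam : Measure Cantor) (hlam : IsUniform lam) :
    ∃ (X Y : Cantor) (c : ℕ), MLRandom lam X ∧ ¬ MLRandom lam Y ∧
      ∀ n : ℕ, 2 * n ≤ cpx UK (seg X n) + cpx UK (seg Y n) + c := by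
  obtain ⟨X, hX, hw⟩ := exists_X hUK.2.1 hlam
  obtain ⟨c, hc⟩ := X_bound hw
  have hN : ∀ k : ℕ, ∃ N, (k = 0 → N = 0) ∧
      ∀ n, N ≤ n → ∀ p, seg X n ∈ UK p → n + k ≤ p.length + c := by
    intro k
    cases k with
    | zero => exact ⟨0, fun _ => rfl, fun n _ p hp => hc n p hp⟩
    | succ k =>
      obtain ⟨N, hN⟩ := X_growth hw (k + 1)
      exact ⟨N, fun h => by omega, fun n hn p hp => (hN n hn p hp).trans (Nat.le_add_right _ _)⟩
  choose N hN0 hN using hN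
  obtain ⟨Y, hY1, hY2⟩ := exists_Y hUK hlam N (hN0 0 rfl)
  refine ⟨X, Y, c + 1, hX, not_random hUK hlam hY1, fun n => ?_⟩
  obtain ⟨k, hk, hm⟩ := hY2 n
  obtain ⟨p, hp, hpx⟩ := cpx_attained hUK (seg X n)
  obtain ⟨q, hq, hqy⟩ := cpx_attained hUK (seg Y n)
  have h1 := hN k n hk p hpx
  have h2 := le_of_two_pow_le ((mart_ge hlam hqy).trans hm)
  rw [seg_length] at h2
  omega
end

section
/- Identify 2^ℕ × 2^ℕ with 2^ℕ via the join map (A, B) ↦ A ⊕ B, where (A⊕B)(2n) = A(n) and (A⊕B)(2n+1) = B(n). If μ and ν are K-trivial Borel probability measures on 2^ℕ, then the pushforward of the product measure μ × ν under the join map is a K-trivial measure. -/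
open MeasureTheory Filter

/-- The join map `(A, B) ↦ A ⊕ B` identifying `2^ℕ × 2^ℕ` with `2^ℕ`:
`(A⊕B)(2n) = A(n)` and `(A⊕B)(2n+1) = B(n)`. -/
def join (p : Cantor × Cantor) : Cantor :=
  fun n => if n % 2 = 0 then p.1 (n / 2) else p.2 (n / 2)


open scoped ENNReal

namespace KT

lemma comp_ite {α σ : Type*} [Primcodable α] [Primcodable σ] {c : α → Prop} [DecidablePred c]
    {f g : α → σ} (hc : Computable (fun a => decide (c a))) (hf : Computable f)
    (hg : Computable g) : Computable (fun a => if c a then f a else g a) :=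
  (Computable.cond hc hf hg).of_eq (fun a => by by_cases h : c a <;> simp [h])

lemma comp_and {α : Type*} [Primcodable α] {c d : α → Prop} [DecidablePred c] [DecidablePred d]
    (hc : Computable (fun a => decide (c a))) (hd : Computable (fun a => decide (d a))) :
    Computable (fun a => decide (c a ∧ d a)) :=
  (Primrec.and.to_comp.comp hc hd).of_eq (fun a => by simp)

lemma comp_not {α : Type*} [Primcodable α] {c : α → Prop} [DecidablePred c]
    (hc : Computable (fun a => decide (c a))) :
    Computable (fun a => decide (¬ c a)) :=
  (Primrec.not.to_comp.comp hc).of_eq (fun a => by simp)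

lemma comp_eq {α : Type*} [Primcodable α] {f g : α → ℕ} (hf : Computable f) (hg : Computable g) :
    Computable (fun a => decide (f a = g a)) :=
  (Primrec.eq (α := ℕ)).decide.to_comp.comp hf hg

lemma comp_le {α : Type*} [Primcodable α] {f g : α → ℕ} (hf : Computable f) (hg : Computable g) :
    Computable (fun a => decide (f a ≤ g a)) :=
  Primrec.nat_le.decide.to_comp.comp hf hg

lemma comp_add {α : Type*} [Primcodable α] {f g : α → ℕ} (hf : Computable f) (hg : Computable g) :
    Computable (fun a => f a + g a) := Primrec.nat_add.to_comp.comp hf hg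
lemma comp_mul {α : Type*} [Primcodable α] {f g : α → ℕ} (hf : Computable f) (hg : Computable g) :
    Computable (fun a => f a * g a) := Primrec.nat_mul.to_comp.comp hf hg
lemma comp_sub {α : Type*} [Primcodable α] {f g : α → ℕ} (hf : Computable f) (hg : Computable g) :
    Computable (fun a => f a - g a) := Primrec.nat_sub.to_comp.comp hf hg
lemma comp_div {α : Type*} [Primcodable α] {f g : α → ℕ} (hf : Computable f) (hg : Computable g) :
    Computable (fun a => f a / g a) := Primrec.nat_div.to_comp.comp hf hg
lemma comp_two_pow {α : Type*} [Primcodable α] {f : α → ℕ} (hf : Computable f) :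
    Computable (fun a => 2 ^ f a) := by
  have : Primrec (fun n : ℕ => 2 ^ n) :=
    (Primrec.nat_rec₁ (f := fun _ y => 2 * y) 1
      (Primrec.nat_mul.comp (Primrec.const 2) Primrec.snd).to₂).of_eq (fun n => by
        induction n with
        | zero => rfl
        | succ n ih => simp only [] at ih ⊢; rw [ih, pow_succ, mul_comm])
  exact this.to_comp.comp hf

/-- dyadic weight, real -/
noncomputable def wt : Option ℕ → ℝ
  | none => 0
  | some r => (2 : ℝ)⁻¹ ^ r

lemma wt_nonneg (o : Option ℕ) : 0 ≤ wt o := by cases o <;> simp [wt]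

/-- numerator and exponent of partial sums of dyadic weights -/
def numL (g : ℕ → Option ℕ) (s : ℕ) : ℕ × ℕ :=
  Nat.rec (0, 0) (fun t y => ((g t).map fun r => (y.1 * 2 ^ r + 2 ^ y.2, y.2 + r)).getD y) s

/-- partial sums -/
noncomputable def ps (g : ℕ → Option ℕ) (s : ℕ) : ℝ := ∑ t ∈ Finset.range s, wt (g t)

lemma ps_succ (g : ℕ → Option ℕ) (s : ℕ) : ps g (s + 1) = ps g s + wt (g s) :=
  Finset.sum_range_succ _ _

lemma ps_mono (g : ℕ → Option ℕ) : Monotone (ps g) :=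
  monotone_nat_of_le_succ fun s => by rw [ps_succ]; linarith [wt_nonneg (g s)]

lemma ps_nonneg (g : ℕ → Option ℕ) (s : ℕ) : 0 ≤ ps g s :=
  Finset.sum_nonneg fun _ _ => wt_nonneg _

lemma ps_eq (g : ℕ → Option ℕ) (s : ℕ) : ps g s * 2 ^ (numL g s).2 = (numL g s).1 := by
  induction s with
  | zero => simp [ps, numL]
  | succ s ih =>
    have e : numL g (s + 1) = ((g s).map fun r => ((numL g s).1 * 2 ^ r + 2 ^ (numL g s).2,
      (numL g s).2 + r)).getD (numL g s) := rfl
    rw [ps_succ, e]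
    cases h : g s with
    | none => simpa [wt] using ih
    | some r =>
      simp only [wt, Option.map_some, Option.getD_some]
      push_cast
      rw [← ih, pow_add, inv_pow]
      field_simp

lemma comp_numL {α : Type*} [Primcodable α] {g : α → ℕ → Option ℕ} (hg : Computable₂ g) :
    Computable₂ (fun a s => numL (g a) s) := by
  unfold numL
  refine Computable.nat_rec (f := fun x : α × ℕ => x.2) (g := fun _ => ((0, 0) : ℕ × ℕ))
    (h := fun x (y : ℕ × (ℕ × ℕ)) => ((g x.1 y.1).map fun r =>
      (y.2.1 * 2 ^ r + 2 ^ y.2.2, y.2.2 + r)).getD y.2) Computable.snd (Computable.const _) ?_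
  have hy : Computable (fun z : (α × ℕ) × (ℕ × (ℕ × ℕ)) => z.2.2) :=
    Computable.snd.comp Computable.snd
  refine Computable.option_getD (Computable.option_map (hg.comp
    (Computable.fst.comp Computable.fst) (Computable.fst.comp Computable.snd)) ?_) hy
  have hy1 : Computable (fun z : ((α × ℕ) × (ℕ × (ℕ × ℕ))) × ℕ => z.1.2.2.1) :=
    Computable.fst.comp (hy.comp Computable.fst)
  have hy2 : Computable (fun z : ((α × ℕ) × (ℕ × (ℕ × ℕ))) × ℕ => z.1.2.2.2) :=
    Computable.snd.comp (hy.comp Computable.fst)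
  exact Computable.pair (comp_add (comp_mul hy1 (comp_two_pow Computable.snd)) (comp_two_pow hy2))
    (comp_add hy2 Computable.snd)

/-- binary value of a string -/
def bval (p : BStr) : ℕ := p.foldl (fun a b => 2 * a + b.toNat) 0

lemma comp_bval : Computable bval := by
  have hb : Primrec Bool.toNat := Primrec.dom_finite _
  exact (Primrec.list_foldl (f := fun p : BStr => p) (g := fun _ => 0)
    (h := fun _ (y : ℕ × Bool) => 2 * y.1 + y.2.toNat) Primrec.id (Primrec.const 0)
    (Primrec.nat_add.comp (Primrec.nat_mul.comp (Primrec.const 2)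
      (Primrec.fst.comp Primrec.snd)) (hb.comp (Primrec.snd.comp Primrec.snd))).to₂).to_comp

lemma bval_concat (p : BStr) (b : Bool) : bval (p ++ [b]) = 2 * bval p + b.toNat := by
  simp [bval]

lemma bval_append (p q : BStr) : bval p * 2 ^ q.length ≤ bval (p ++ q) ∧
    bval (p ++ q) + 1 ≤ (bval p + 1) * 2 ^ q.length := by
  induction q using List.reverseRecOn with
  | nil => simp
  | append_singleton q b ih =>
    rw [← List.append_assoc, bval_concat, List.length_append, List.length_singleton, pow_succ]
    have := Bool.toNat_le b
    constructor <;> nlinarith [ih.1, ih.2]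

lemma exists_bval : ∀ (n v : ℕ), v < 2 ^ n → ∃ p : BStr, p.length = n ∧ bval p = v
  | 0, v, h => ⟨[], rfl, by simp at h; simp [bval, h]⟩
  | n + 1, v, h => by
    obtain ⟨p, hp, hv⟩ := exists_bval n (v / 2) (by rw [pow_succ] at h; omega)
    refine ⟨p ++ [decide (v % 2 = 1)], by simp [hp], ?_⟩
    rw [bval_concat, hv]
    rcases Nat.mod_two_eq_zero_or_one v with h | h <;> simp [h] <;> omega

lemma bval_inj : ∀ (p q : BStr), p.length = q.length → bval p = bval q → p = q := by
  intro p
  induction p using List.reverseRecOn with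
  | nil => intro q h _; simpa [eq_comm] using h
  | append_singleton p b ih =>
    intro q
    induction q using List.reverseRecOn with
    | nil => intro h _; simp at h
    | append_singleton q c _ =>
      intro h1 h2
      rw [bval_concat, bval_concat] at h2
      have hb := Bool.toNat_le b
      have hc := Bool.toNat_le c
      have e1 : bval p = bval q := by omega
      have e2 : b.toNat = c.toNat := by omega
      rw [ih q (by simpa using h1) e1]
      have : b = c := by revert e2; cases b <;> cases c <;> simp
      rw [this]

/-- real left end point and right end point -/
lemma bval_prefix {p q : BStr} (h : p <+: q) :
    (bval p : ℝ) * (2 : ℝ)⁻¹ ^ p.length ≤ bval q * (2 : ℝ)⁻¹ ^ q.length ∧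
    ((bval q : ℝ) + 1) * (2 : ℝ)⁻¹ ^ q.length ≤ (bval p + 1) * (2 : ℝ)⁻¹ ^ p.length := by
  obtain ⟨t, rfl⟩ := h
  have h := bval_append p t
  have h1 : (bval p : ℝ) * 2 ^ t.length ≤ bval (p ++ t) := by exact_mod_cast h.1
  have h2 : (bval (p ++ t) : ℝ) + 1 ≤ (bval p + 1) * 2 ^ t.length := by exact_mod_cast h.2
  rw [List.length_append, pow_add]
  have e : (2 : ℝ) ^ t.length * (2 : ℝ)⁻¹ ^ t.length = 1 := by
    rw [← mul_pow]; simp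
  have p1 : (0 : ℝ) < (2 : ℝ)⁻¹ ^ t.length := by positivity
  have p2 : (0 : ℝ) < (2 : ℝ)⁻¹ ^ p.length := by positivity
  constructor
  · calc (bval p : ℝ) * (2 : ℝ)⁻¹ ^ p.length
        = (bval p * 2 ^ t.length) * ((2 : ℝ)⁻¹ ^ p.length * (2 : ℝ)⁻¹ ^ t.length) := by
          linear_combination (-(bval p : ℝ) * (2 : ℝ)⁻¹ ^ p.length) * e
      _ ≤ _ := by gcongr
  · calc _ ≤ ((bval p + 1) * 2 ^ t.length) * ((2 : ℝ)⁻¹ ^ p.length * (2 : ℝ)⁻¹ ^ t.length) := by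
          gcongr
      _ = _ := by linear_combination ((bval p + 1 : ℝ) * (2 : ℝ)⁻¹ ^ p.length) * e

/-- the code value of a request of exponent `r` at a partial sum `A / 2 ^ L` -/
def cv (y : ℕ × ℕ) (r : ℕ) : ℕ := (y.1 * 2 ^ (r + 1) + (2 ^ y.2 - 1)) / 2 ^ y.2

lemma cv_spec (g : ℕ → Option ℕ) (i r : ℕ) (h : g i = some r) :
    ps g i ≤ cv (numL g i) r * (2 : ℝ)⁻¹ ^ (r + 1) ∧
    ((cv (numL g i) r : ℝ) + 1) * (2 : ℝ)⁻¹ ^ (r + 1) ≤ ps g (i + 1) := by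
  have hs := ps_eq g i
  rw [ps_succ, h, wt]
  set A := (numL g i).1
  set L := (numL g i).2
  set v := cv (numL g i) r with hv
  have hL : 0 < 2 ^ L := by positivity
  have h1 : A * 2 ^ (r + 1) ≤ v * 2 ^ L := by
    have := Nat.div_add_mod (A * 2 ^ (r + 1) + (2 ^ L - 1)) (2 ^ L)
    have h2 := Nat.mod_lt (A * 2 ^ (r + 1) + (2 ^ L - 1)) hL
    have h3 : v = (A * 2 ^ (r + 1) + (2 ^ L - 1)) / 2 ^ L := rfl
    rw [← h3, mul_comm] at this
    omega
  have h2 : (v + 1) * 2 ^ L ≤ A * 2 ^ (r + 1) + 2 * 2 ^ L := by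
    have := Nat.div_mul_le_self (A * 2 ^ (r + 1) + (2 ^ L - 1)) (2 ^ L)
    have h3 : v = (A * 2 ^ (r + 1) + (2 ^ L - 1)) / 2 ^ L := rfl
    rw [← h3] at this
    rw [add_mul]
    omega
  have h1' : (A : ℝ) * 2 ^ (r + 1) ≤ v * 2 ^ L := by exact_mod_cast h1
  have h2' : ((v : ℝ) + 1) * 2 ^ L ≤ A * 2 ^ (r + 1) + 2 * 2 ^ L := by exact_mod_cast h2
  rw [← hs] at h1' h2'
  have hL' : (0 : ℝ) < 2 ^ L := by positivity
  have k1 : ps g i * 2 ^ (r + 1) ≤ v := by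
    refine le_of_mul_le_mul_right ?_ hL'; linarith
  have k2 : (v : ℝ) + 1 ≤ ps g i * 2 ^ (r + 1) + 2 := by
    refine le_of_mul_le_mul_right ?_ hL'; linarith
  have e : (2 : ℝ) ^ (r + 1) * (2 : ℝ)⁻¹ ^ (r + 1) = 1 := by
    rw [← mul_pow]; simp
  have p1 : (0 : ℝ) < (2 : ℝ)⁻¹ ^ (r + 1) := by positivity
  constructor
  · calc ps g i = (ps g i * 2 ^ (r + 1)) * (2 : ℝ)⁻¹ ^ (r + 1) := by rw [mul_assoc, e, mul_one]
      _ ≤ _ := by gcongr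
  · calc _ ≤ (ps g i * 2 ^ (r + 1) + 2) * (2 : ℝ)⁻¹ ^ (r + 1) := by gcongr
      _ = _ := by
        rw [add_mul, mul_assoc, e, mul_one, pow_succ (2 : ℝ)⁻¹]; ring

lemma cpx_le {U : BStr →. BStr} {q x : BStr} (h : x ∈ U q) : cpx U x ≤ q.length :=
  Nat.sInf_le ⟨q, rfl, h⟩

/-- machine existence theorem -/
theorem machine_exists {U : BStr →. BStr} (hU : UniversalPrefixFree U)
    (f : ℕ → Option (ℕ × BStr)) (hf : Computable f)
    (hsum : ∀ s, ps (fun i => (f i).map Prod.fst) s ≤ 1) :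
    ∃ c : ℕ, ∀ i r x, f i = some (r, x) → ∃ q : BStr, q.length ≤ r + c ∧ x ∈ U q := by
  set g : ℕ → Option ℕ := fun i => (f i).map Prod.fst with hg
  let F : BStr → ℕ → Option BStr := fun p i =>
    (f i).bind fun y => if p.length = y.1 + 1 ∧ bval p = cv (numL g i) y.1 then some y.2 else none
  have hgc : Computable g := Computable.option_map hf (Computable.fst.comp Computable.snd).to₂
  have hn : Computable (fun i => numL g i) := by
    have : Computable₂ (fun (_ : Unit) (i : ℕ) => numL g i) :=
      comp_numL (g := fun _ => g) (hgc.comp Computable.snd).to₂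
    exact this.comp (Computable.const ()) Computable.id
  have hFc : Computable₂ F := by
    refine Computable.option_bind (hf.comp Computable.snd) ?_
    have y1 : Computable (fun z : (BStr × ℕ) × (ℕ × BStr) => z.2.1) :=
      Computable.fst.comp Computable.snd
    have pp : Computable (fun z : (BStr × ℕ) × (ℕ × BStr) => z.1.1) :=
      Computable.fst.comp Computable.fst
    have nn : Computable (fun z : (BStr × ℕ) × (ℕ × BStr) => numL g z.1.2) :=
      hn.comp (Computable.snd.comp Computable.fst)
    refine comp_ite (comp_and (comp_eq (Computable.list_length.comp pp)
      (comp_add y1 (Computable.const 1))) (comp_eq (comp_bval.comp pp) ?_))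
      (Computable.option_some.comp (Computable.snd.comp Computable.snd)) (Computable.const none)
    have hL := comp_two_pow (Computable.snd.comp nn)
    exact comp_div (comp_add (comp_mul (Computable.fst.comp nn) (comp_two_pow
      (comp_add y1 (Computable.const 1)))) (comp_sub hL (Computable.const 1))) hL
  have hFs : ∀ p i x, x ∈ F p i → ∃ r, f i = some (r, x) ∧ p.length = r + 1 ∧
      bval p = cv (numL g i) r := by
    intro p i x hx
    simp only [F, Option.mem_def, Option.bind_eq_some_iff] at hx
    obtain ⟨⟨r, y⟩, h1, h2⟩ := hx
    split_ifs at h2 with h3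
    simp only [Option.some.injEq] at h2
    subst h2
    exact ⟨r, h1, h3.1, h3.2⟩
  have key : ∀ p q i j x y, x ∈ F p i → y ∈ F q j → p <+: q → i = j := by
    intro p q i j x y hx hy hpq
    obtain ⟨r, h1, h2, h3⟩ := hFs _ _ _ hx
    obtain ⟨r', h1', h2', h3'⟩ := hFs _ _ _ hy
    have a := cv_spec g i r (by simp [hg, h1])
    have b := cv_spec g j r' (by simp [hg, h1'])
    have c := bval_prefix hpq
    rw [← h2, ← h3] at a
    rw [← h2', ← h3'] at b
    have pq : (0 : ℝ) < (2 : ℝ)⁻¹ ^ q.length := by positivity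
    rcases lt_trichotomy i j with h | h | h
    · have := ps_mono g (Nat.succ_le_of_lt h)
      simp only [Nat.succ_eq_add_one] at this
      nlinarith
    · exact h
    · have := ps_mono g (Nat.succ_le_of_lt h)
      simp only [Nat.succ_eq_add_one] at this
      nlinarith
  obtain ⟨c, hc⟩ := hU.2.2 (fun p => Nat.rfindOpt (F p)) (Partrec.rfindOpt hFc) (by
    intro p q hp hq hpq
    obtain ⟨i, x, hx⟩ := Nat.rfindOpt_dom.1 hp
    obtain ⟨j, y, hy⟩ := Nat.rfindOpt_dom.1 hq
    have := key p q i j x y hx hy hpq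
    subst this
    obtain ⟨r, h1, h2, h3⟩ := hFs _ _ _ hx
    obtain ⟨r', h1', h2', h3'⟩ := hFs _ _ _ hy
    rw [h1] at h1'
    simp only [Option.some.injEq, Prod.mk.injEq] at h1'
    exact hpq.eq_of_length (by omega))
  refine ⟨c + 1, fun i r x h => ?_⟩
  have a := cv_spec g i r (by simp [hg, h])
  obtain ⟨p, hp1, hp2⟩ := exists_bval (r + 1) (cv (numL g i) r) (by
    have h1 := a.2.trans (hsum (i + 1))
    have e : (2 : ℝ) ^ (r + 1) * (2 : ℝ)⁻¹ ^ (r + 1) = 1 := by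
      rw [← mul_pow]; simp
    have : (cv (numL g i) r : ℝ) + 1 ≤ 2 ^ (r + 1) := by
      refine le_of_mul_le_mul_right (a := (2 : ℝ)⁻¹ ^ (r + 1)) ?_ (by positivity)
      rw [e]; exact h1
    have h2 : cv (numL g i) r + 1 ≤ 2 ^ (r + 1) := by exact_mod_cast this
    omega)
  have hx : x ∈ F p i := by simp [F, h, hp1, hp2]
  have hdom : (Nat.rfindOpt (F p)).Dom := Nat.rfindOpt_dom.2 ⟨i, x, hx⟩
  obtain ⟨j, hj⟩ := Nat.rfindOpt_spec (Part.get_mem hdom)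
  have hij := key p p i j _ _ hx hj (List.prefix_refl _)
  subst hij
  have hxe : (Nat.rfindOpt (F p)).get hdom = x := by
    rw [Option.mem_def] at hx hj
    rw [hx] at hj; simpa using hj.symm
  obtain ⟨q, hq1, hq2⟩ := hc p x (hxe ▸ Part.get_mem hdom)
  exact ⟨q, by omega, hq2⟩

/-- extended weight -/
noncomputable def wtE (o : Option ℕ) : ℝ≥0∞ := ENNReal.ofReal (wt o)

lemma sum_wtE (g : ℕ → Option ℕ) (s : ℕ) :
    ∑ t ∈ Finset.range s, wtE (g t) = ENNReal.ofReal (ps g s) :=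
  (ENNReal.ofReal_sum_of_nonneg fun _ _ => wt_nonneg _).symm

lemma ps_le_one {g : ℕ → Option ℕ} (h : ∑' i, wtE (g i) ≤ 1) (s : ℕ) : ps g s ≤ 1 := by
  have h1 := (ENNReal.sum_le_tsum (Finset.range s)).trans h
  rw [sum_wtE] at h1
  exact ENNReal.ofReal_le_one.1 h1

lemma tsum_unpair3 (F : ℕ → ℕ → ℕ → ℝ≥0∞) :
    ∑' i : ℕ, F i.unpair.1 i.unpair.2.unpair.1 i.unpair.2.unpair.2 = ∑' a, ∑' b, ∑' c, F a b c := by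
  have key : ∀ H : ℕ → ℕ → ℝ≥0∞, ∑' i : ℕ, H i.unpair.1 i.unpair.2 = ∑' a, ∑' b, H a b := by
    intro H
    rw [← ENNReal.tsum_prod]
    exact Nat.pairEquiv.symm.tsum_eq (fun z : ℕ × ℕ => H z.1 z.2)
  rw [key (fun a j => F a j.unpair.1 j.unpair.2)]
  exact tsum_congr fun a => key (F a)

/-- the decidable test for a partial sum being at most `2 ^ C / 2 ^ k` -/
def tr (g : ℕ → Option ℕ) (C s k : ℕ) : Prop :=
  (numL g s).1 * 2 ^ k ≤ 2 ^ ((numL g s).2 + C)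

instance (g : ℕ → Option ℕ) (C s k : ℕ) : Decidable (tr g C s k) :=
  inferInstanceAs (Decidable (_ ≤ _))

lemma tr_iff (g : ℕ → Option ℕ) (C s k : ℕ) :
    tr g C s k ↔ ps g s ≤ 2 ^ C * (2 : ℝ)⁻¹ ^ k := by
  have h := ps_eq g s
  unfold tr
  have e : (2 : ℝ) ^ k * (2 : ℝ)⁻¹ ^ k = 1 := by rw [← mul_pow]; simp
  have hL : (0 : ℝ) < 2 ^ (numL g s).2 := by positivity
  have hk : (0 : ℝ) < 2 ^ k := by positivity
  rw [← Nat.cast_le (α := ℝ)]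
  push_cast
  rw [← h, pow_add, ← mul_le_mul_iff_of_pos_right (b := ps g s) (mul_pos hk hL)]
  constructor
  · intro h'
    calc _ = ps g s * 2 ^ (numL g s).2 * 2 ^ k := by ring
      _ ≤ _ := h'
      _ = _ := by linear_combination (-(2 : ℝ) ^ (numL g s).2 * 2 ^ C) * e
  · intro h'
    calc _ = ps g s * (2 ^ k * 2 ^ (numL g s).2) := by ring
      _ ≤ _ := h'
      _ = _ := by linear_combination ((2 : ℝ) ^ (numL g s).2 * 2 ^ C) * e

lemma comp_tr {α β : Type*} [Primcodable α] [Primcodable β] {g : β → ℕ → Option ℕ}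
    (hg : Computable₂ g) (C : ℕ) {b : α → β} {s k : α → ℕ}
    (hb : Computable b) (hs : Computable s) (hk : Computable k) :
    Computable (fun a => decide (tr (g (b a)) C (s a) (k a))) := by
  have hn : Computable (fun a => numL (g (b a)) (s a)) := (comp_numL hg).comp hb hs
  have := comp_le (comp_mul (Computable.fst.comp hn) (comp_two_pow hk))
    (comp_two_pow (comp_add (Computable.snd.comp hn) (Computable.const C)))
  exact this.of_eq fun a => decide_eq_decide.2 Iff.rfl

/-- `e` enumerates the graph of `U` without repetition -/
structure IsEnum (U : BStr →. BStr) (e : ℕ → Option (BStr × BStr)) : Prop where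
  comp : Computable e
  sound : ∀ s p x, e s = some (p, x) → x ∈ U p
  complete : ∀ p x, x ∈ U p → ∃ s, e s = some (p, x)
  inj : ∀ s t p x y, e s = some (p, x) → e t = some (p, y) → s = t

open Nat.Partrec (Code) in
lemma exists_enum {U : BStr →. BStr} (hU : Partrec U) : ∃ e, IsEnum U e := by
  obtain ⟨c, hc⟩ := Code.exists_code.1 hU
  have hev : ∀ (p : BStr) (v : ℕ), v ∈ c.eval (Encodable.encode p) ↔
      ∃ x ∈ U p, Encodable.encode x = v := by
    intro p v
    rw [hc]
    simp
  let E : ℕ → ℕ → Option (BStr × BStr) := fun k n =>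
    (Encodable.decode (α := BStr) n).bind fun p =>
      (Code.evaln (k + 1) c n).bind fun v => (Encodable.decode (α := BStr) v).bind fun x =>
      if Encodable.encode p = n ∧ (Code.evaln k c n).isSome.toNat = 0 then some (p, x) else none
  have hE : ∀ k n p x, E k n = some (p, x) ↔ n = Encodable.encode p ∧
      Encodable.encode x ∈ Code.evaln (k + 1) c n ∧ Code.evaln k c n = none := by
    intro k n p x
    simp only [E, Option.bind_eq_some_iff]
    constructor
    · rintro ⟨p', h1, v, h2, x', h3, h4⟩
      split_ifs at h4 with h5
      simp only [Option.some.injEq, Prod.mk.injEq] at h4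
      obtain ⟨rfl, rfl⟩ := h4
      refine ⟨h5.1.symm, ?_, ?_⟩
      · have hv : v ∈ c.eval (Encodable.encode p') := by
          rw [h5.1]; exact Code.evaln_sound h2
        obtain ⟨x, hx, rfl⟩ := (hev _ _).1 hv
        simp only [Encodable.encodek, Option.some.injEq] at h3
        subst h3
        exact h2
      · have := h5.2
        cases h : Code.evaln k c n <;> simp [h] at this ⊢
    · rintro ⟨rfl, h2, h3⟩
      exact ⟨p, by simp, _, h2, x, by simp, by simp [h3]⟩
  have h1 : Computable₂ E := by
    have ev : ∀ {α : Type} [Primcodable α] {k n : α → ℕ}, Computable k → Computable n →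
        Computable (fun a => Code.evaln (k a) c (n a)) := fun hk hn =>
      Code.primrec_evaln.to_comp.comp (((hk.pair (Computable.const c))).pair hn)
    refine Computable.option_bind (Computable.decode.comp Computable.snd) ?_
    refine Computable.option_bind (ev (Computable.succ.comp
      (Computable.fst.comp Computable.fst)) (Computable.snd.comp Computable.fst)) ?_
    refine Computable.option_bind (Computable.decode.comp Computable.snd) ?_
    have z1 : Computable (fun z : (((ℕ × ℕ) × BStr) × ℕ) × BStr => z.1.1.1) :=
      Computable.fst.comp (Computable.fst.comp Computable.fst)
    have z2 : Computable (fun z : (((ℕ × ℕ) × BStr) × ℕ) × BStr => z.1.1.2) :=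
      Computable.snd.comp (Computable.fst.comp Computable.fst)
    have hb : Primrec Bool.toNat := Primrec.dom_finite _
    refine comp_ite (comp_and (comp_eq (Computable.encode.comp z2) (Computable.snd.comp z1))
      (comp_eq (hb.to_comp.comp (Primrec.option_isSome.to_comp.comp
        (ev (Computable.fst.comp z1) (Computable.snd.comp z1)))) (Computable.const 0)))
      (Computable.option_some.comp (z2.pair Computable.snd)) (Computable.const none)
  refine ⟨fun s => E s.unpair.1 s.unpair.2, ?_, ?_, ?_, ?_⟩
  · exact h1.comp (Computable.fst.comp Computable.unpair) (Computable.snd.comp Computable.unpair)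
  · intro s p x h
    obtain ⟨h1, h2, h3⟩ := (hE _ _ _ _).1 h
    have := Code.evaln_sound h2
    rw [h1, hev] at this
    obtain ⟨y, hy, hxy⟩ := this
    rwa [← Encodable.encode_injective hxy]
  · intro p x h
    have := (hev p _).2 ⟨x, h, rfl⟩
    have hex := Code.evaln_complete.1 this
    have hex' : ∃ k, (Code.evaln k c (Encodable.encode p)).isSome :=
      hex.imp fun k hk => by rw [Option.mem_def.1 hk]; rfl
    classical
    have hf := Nat.find_spec hex'
    have hm : ∀ k < Nat.find hex', Code.evaln k c (Encodable.encode p) = none := fun k hk => by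
      simpa using Nat.find_min hex' hk
    cases hk : Nat.find hex' with
    | zero => rw [hk] at hf; simp [Code.evaln] at hf
    | succ k =>
      rw [hk] at hf hm
      obtain ⟨v, hv⟩ := Option.isSome_iff_exists.1 hf
      have e1 : v = Encodable.encode x := Part.mem_unique (Code.evaln_sound hv) this
      subst e1
      refine ⟨Nat.pair k (Encodable.encode p), ?_⟩
      simp only [Nat.unpair_pair]
      exact (hE _ _ _ _).2 ⟨rfl, hv, hm k (Nat.lt_succ_self k)⟩
  · intro s t p x y hs ht
    obtain ⟨a1, a2, a3⟩ := (hE _ _ _ _).1 hs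
    obtain ⟨b1, b2, b3⟩ := (hE _ _ _ _).1 ht
    have hst : s.unpair.2 = t.unpair.2 := by rw [a1, b1]
    rw [hst] at a2 a3
    have : s.unpair.1 = t.unpair.1 := by
      rcases lt_trichotomy s.unpair.1 t.unpair.1 with h | h | h
      · have := Code.evaln_mono (Nat.succ_le_of_lt h) a2
        rw [b3] at this; simp at this
      · exact h
      · have := Code.evaln_mono (Nat.succ_le_of_lt h) b2
        rw [a3] at this; simp at this
    rw [← Nat.pair_unpair s, ← Nat.pair_unpair t, this, hst]

lemma kraft_finset (S : Finset BStr) (hS : ∀ p ∈ S, ∀ q ∈ S, p <+: q → p = q) :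
    ∑ p ∈ S, (2 : ℝ)⁻¹ ^ p.length ≤ 1 := by
  by_cases h0 : [] ∈ S
  · have : S = {[]} := by
      ext q
      simp only [Finset.mem_singleton]
      exact ⟨fun hq => (hS [] h0 q hq List.nil_prefix).symm, fun h => h ▸ h0⟩
    rw [this]; simp
  · have hud : InformationTheory.UniquelyDecodable (S : Set BStr) := by
      intro L₁
      induction L₁ with
      | nil =>
        intro L₂ _ h2 h
        cases L₂ with
        | nil => rfl
        | cons b L₂ =>
          simp only [List.flatten_nil, List.flatten_cons] at h
          have : b = [] := (List.append_eq_nil_iff.1 h.symm).1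
          exact absurd (this ▸ h2 b (by simp)) h0
      | cons a L₁ ih =>
        intro L₂ h1 h2 h
        cases L₂ with
        | nil =>
          simp only [List.flatten_nil, List.flatten_cons] at h
          have : a = [] := (List.append_eq_nil_iff.1 h).1
          exact absurd (this ▸ h1 a (by simp)) h0
        | cons b L₂ =>
          simp only [List.flatten_cons] at h
          have ha : a ∈ S := by simpa using h1 a (by simp)
          have hb : b ∈ S := by simpa using h2 b (by simp)
          have hab : a = b := by
            rcases List.prefix_or_prefix_of_prefix (l₃ := a ++ L₁.flatten)
              (List.prefix_append a _) (h ▸ List.prefix_append b _) with h' | h'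
            · exact hS a ha b hb h'
            · exact (hS b hb a ha h').symm
          subst hab
          rw [ih L₂ (fun w hw => h1 w (by simp [hw])) (fun w hw => h2 w (by simp [hw]))
            (List.append_cancel_left h)]
    have := InformationTheory.kraft_mcmillan_inequality hud
    simpa using this

lemma kraft_enum {U : BStr →. BStr} {e : ℕ → Option (BStr × BStr)} (hp : PrefixFreeDom U)
    (he : IsEnum U e) : ∑' s, wtE ((e s).map fun y => y.1.length) ≤ 1 := by
  classical
  refine ENNReal.tsum_le_of_sum_range_le fun n => ?_
  rw [sum_wtE, ENNReal.ofReal_le_one, ps]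
  let T := (Finset.range n).filter fun s => (e s).isSome
  let φ : ℕ → BStr := fun s => ((e s).getD ([], [])).1
  have hT : ∀ s ∈ T, ∃ p x, e s = some (p, x) ∧ φ s = p := by
    intro s hs
    obtain ⟨⟨p, x⟩, h⟩ := Option.isSome_iff_exists.1 (Finset.mem_filter.1 hs).2
    exact ⟨p, x, h, by simp [φ, h]⟩
  have h1 : ∑ t ∈ Finset.range n, wt ((e t).map fun y => y.1.length) =
      ∑ t ∈ T, (2 : ℝ)⁻¹ ^ (φ t).length := by
    rw [Finset.sum_filter]
    refine Finset.sum_congr rfl fun s _ => ?_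
    cases h : e s with
    | none => simp [wt]
    | some y => simp [wt, φ, h]
  have h2 : ∑ p ∈ T.image φ, (2 : ℝ)⁻¹ ^ p.length = ∑ t ∈ T, (2 : ℝ)⁻¹ ^ (φ t).length := by
    refine Finset.sum_image fun s hs t ht hst => ?_
    obtain ⟨p, x, a, b⟩ := hT s hs
    obtain ⟨q, y, a', b'⟩ := hT t ht
    rw [b, b'] at hst
    subst hst
    exact he.inj _ _ _ _ _ a a'
  rw [h1, ← h2]
  refine kraft_finset _ fun p hp' q hq' hpq => ?_
  obtain ⟨s, hs, rfl⟩ := Finset.mem_image.1 hp'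
  obtain ⟨t, ht, rfl⟩ := Finset.mem_image.1 hq'
  obtain ⟨p, x, a, b⟩ := hT s hs
  obtain ⟨q, y, a', b'⟩ := hT t ht
  rw [b, b'] at hpq ⊢
  exact hp p q (Part.dom_iff_mem.2 ⟨x, he.sound _ _ _ a⟩)
    (Part.dom_iff_mem.2 ⟨y, he.sound _ _ _ a'⟩) hpq

/-- exponents of programs printing a string of length `m` -/
def G (e : ℕ → Option (BStr × BStr)) (m s : ℕ) : Option ℕ :=
  (e s).bind fun y => if y.2.length = m then some y.1.length else none

lemma comp_G {e : ℕ → Option (BStr × BStr)} (he : Computable e) : Computable₂ (G e) := by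
  refine Computable.option_bind (he.comp Computable.snd) ?_
  exact comp_ite (comp_eq (Computable.list_length.comp (Computable.snd.comp Computable.snd))
    (Computable.fst.comp Computable.fst)) (Computable.option_some.comp
      (Computable.list_length.comp (Computable.fst.comp Computable.snd))) (Computable.const none)

lemma tsum_G {U : BStr →. BStr} {e : ℕ → Option (BStr × BStr)} (hp : PrefixFreeDom U)
    (he : IsEnum U e) : ∑' m, ∑' s, wtE (G e m s) ≤ 1 := by
  rw [ENNReal.tsum_comm]
  refine le_trans (ENNReal.tsum_le_tsum fun s => ?_) (kraft_enum hp he)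
  cases h : e s with
  | none => simp [G, h, wtE, wt]
  | some y =>
    rw [tsum_eq_single y.2.length]
    · simp [G, h]
    · intro m hm
      simp [G, h, hm.symm, wtE, wt]

lemma tsum_thresh (P : ℝ≥0∞) : ∑' k : ℕ, (if ENNReal.ofReal ((2 : ℝ)⁻¹ ^ k) < P then
    wtE (some (k + 1)) else 0) ≤ P := by
  classical
  by_cases h : ∃ k : ℕ, ENNReal.ofReal ((2 : ℝ)⁻¹ ^ k) < P
  · refine le_trans ?_ (Nat.find_spec h).le
    set k0 := Nat.find h
    have hs : Summable fun k : ℕ => if k0 ≤ k then (2 : ℝ)⁻¹ ^ k else 0 := by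
      refine Summable.of_nonneg_of_le (fun k => ?_) (fun k => ?_)
        (summable_geometric_of_lt_one (r := (2 : ℝ)⁻¹) (by norm_num) (by norm_num))
      · split_ifs <;> positivity
      · split_ifs
        · exact le_rfl
        · positivity
    have ht := tsum_geometric_inv_two_ge k0
    have e : (2 : ℝ)⁻¹ ^ k0 = ∑' k : ℕ, (if k0 ≤ k then (2 : ℝ)⁻¹ ^ k else 0) * 2⁻¹ := by
      rw [tsum_mul_right, ht]; ring
    rw [e, ENNReal.ofReal_tsum_of_nonneg (fun k => by split_ifs <;> positivity) (hs.mul_right _)]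
    refine ENNReal.tsum_le_tsum fun k => ?_
    split_ifs with h1 h2 h2
    · simp only [wtE, wt, pow_succ]; exact le_rfl
    · exact absurd (Nat.find_min' h h1) h2
    · exact zero_le
    · exact zero_le
  · push Not at h
    simp only [fun k => not_lt.2 (h k), if_false, tsum_zero, zero_le]

theorem coding {U : BStr →. BStr} (hU : UniversalPrefixFree U)
    {e : ℕ → Option (BStr × BStr)} (he : IsEnum U e) :
    ∃ C : ℕ, ∀ m, ∑' s, wtE (G e m s) ≤ ENNReal.ofReal (2 ^ C * (2 : ℝ)⁻¹ ^ cpxN U m) := by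
  have hG := comp_G he.comp
  let R : ℕ → ℕ → ℕ → Option (ℕ × BStr) := fun m k s =>
    if tr (G e m) 0 s k ∧ ¬ tr (G e m) 0 (s + 1) k then some (k + 1, numStr m) else none
  let f : ℕ → Option (ℕ × BStr) := fun i =>
    R i.unpair.1 i.unpair.2.unpair.1 i.unpair.2.unpair.2
  have hns : Computable numStr := by
    have : Primrec (fun n : ℕ => (List.range n).map fun _ => false) :=
      Primrec.list_map Primrec.list_range (Primrec.const false).to₂
    exact this.to_comp.of_eq fun n => by simp [numStr]
  have hf : Computable f := by
    have m1 : Computable (fun i : ℕ => i.unpair.1) := Computable.fst.comp Computable.unpair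
    have m2 : Computable (fun i : ℕ => i.unpair.2) := Computable.snd.comp Computable.unpair
    have k1 : Computable (fun i : ℕ => i.unpair.2.unpair.1) := m1.comp m2
    have s1 : Computable (fun i : ℕ => i.unpair.2.unpair.2) := m2.comp m2
    exact comp_ite (comp_and (comp_tr hG 0 m1 s1 k1)
      (comp_not (comp_tr hG 0 m1 (Computable.succ.comp s1) k1)))
      (Computable.option_some.comp ((Computable.succ.comp k1).pair (hns.comp m1)))
      (Computable.const none)
  have hk : ∀ m k, ∑' s, wtE ((R m k s).map Prod.fst) ≤
      if ENNReal.ofReal ((2 : ℝ)⁻¹ ^ k) < ∑' s, wtE (G e m s) then wtE (some (k + 1)) else 0 := by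
    intro m k
    by_cases h : ∃ s, tr (G e m) 0 s k ∧ ¬ tr (G e m) 0 (s + 1) k
    · obtain ⟨s, hs⟩ := h
      rw [tsum_eq_single s]
      · rw [if_pos]
        · simp [R, hs]
        · have h2 := hs.2
          rw [tr_iff, not_le, pow_zero, one_mul] at h2
          refine lt_of_lt_of_le ((ENNReal.ofReal_lt_ofReal_iff (lt_trans (by positivity) h2)).2 h2)
            ?_
          rw [← sum_wtE]
          exact ENNReal.sum_le_tsum _
      · intro t hts
        have : ¬ (tr (G e m) 0 t k ∧ ¬ tr (G e m) 0 (t + 1) k) := by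
          rintro ⟨a, b⟩
          obtain ⟨c, d⟩ := hs
          rw [tr_iff] at a b c d
          rcases lt_or_gt_of_ne hts with h | h
          · exact b ((ps_mono _ (Nat.succ_le_of_lt h)).trans c)
          · exact d ((ps_mono _ (Nat.succ_le_of_lt h)).trans a)
        simp [R, this, wtE, wt]
    · push Not at h
      have : ∀ s, R m k s = none := fun s => by
        simp only [R]
        rw [if_neg]
        rintro ⟨a, b⟩
        exact b (h s a)
      simp [this, wtE, wt]
  obtain ⟨c, hc⟩ := machine_exists hU f hf (ps_le_one (by
    have := tsum_unpair3 fun m k s => wtE ((R m k s).map Prod.fst)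
    refine (le_of_eq this).trans ?_
    refine le_trans (ENNReal.tsum_le_tsum fun m => ?_) (tsum_G hU.2.1 he)
    exact (ENNReal.tsum_le_tsum fun k => hk m k).trans (tsum_thresh _)))
  have main : ∀ m k, k + 1 + c < cpxN U m →
      ∑' s, wtE (G e m s) ≤ ENNReal.ofReal ((2 : ℝ)⁻¹ ^ k) := by
    intro m k hlt
    by_contra hcon
    rw [not_le, ENNReal.tsum_eq_iSup_nat, lt_iSup_iff] at hcon
    obtain ⟨s, hs⟩ := hcon
    rw [sum_wtE] at hs
    have hs' : ¬ tr (G e m) 0 s k := by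
      rw [tr_iff, not_le, pow_zero, one_mul]
      exact (ENNReal.ofReal_lt_ofReal_iff_of_nonneg (by positivity)).1 hs
    have hex : ∃ s, ¬ tr (G e m) 0 s k := ⟨s, hs'⟩
    have hf1 := Nat.find_spec hex
    have hf2 : ∀ t < Nat.find hex, tr (G e m) 0 t k := fun t ht => by
      simpa using Nat.find_min hex ht
    cases hn : Nat.find hex with
    | zero =>
      rw [hn, tr_iff] at hf1
      refine hf1 ?_
      simp [ps]
    | succ t =>
      rw [hn] at hf1 hf2
      have hR : f (Nat.pair m (Nat.pair k t)) = some (k + 1, numStr m) := by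
        simp only [f, R, Nat.unpair_pair]
        rw [if_pos ⟨hf2 t (Nat.lt_succ_self t), hf1⟩]
      obtain ⟨q, hq, hx⟩ := hc _ _ _ hR
      have : cpxN U m ≤ q.length := cpx_le hx
      omega
  refine ⟨c + 2, fun m => ?_⟩
  have e : (2 : ℝ) ^ (c + 2) * (2 : ℝ)⁻¹ ^ (c + 2) = 1 := by rw [← mul_pow]; simp
  by_cases h : cpxN U m ≤ c + 2
  · refine (ENNReal.le_tsum m).trans ((tsum_G hU.2.1 he).trans ?_)
    rw [← ENNReal.ofReal_one]
    refine ENNReal.ofReal_le_ofReal ?_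
    rw [← e]
    refine mul_le_mul_of_nonneg_left ?_ (by positivity)
    exact pow_le_pow_of_le_one (by norm_num) (by norm_num) h
  · obtain ⟨k, hk⟩ := Nat.exists_eq_add_of_le (le_of_not_ge h)
    have := main m k (by omega)
    rw [hk, pow_add (2 : ℝ)⁻¹, ← mul_assoc, e, one_mul]
    exact this

lemma tsum_trunc (a : ℕ → ℝ≥0∞) (B : ℝ≥0∞) (c : ℕ → Prop) [DecidablePred c]
    (hc : ∀ s, c s → ∑ t ∈ Finset.range (s + 1), a t ≤ B) :
    ∑' s, (if c s then a s else 0) ≤ B := by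
  refine ENNReal.tsum_le_of_sum_range_le fun n => ?_
  have h1 : ∀ n, ∑ s ∈ Finset.range n, (if c s then a s else 0) ≤ ∑ s ∈ Finset.range n, a s :=
    fun n => Finset.sum_le_sum fun s _ => by split_ifs <;> simp
  induction n with
  | zero => simp
  | succ n ih =>
    by_cases h : c n
    · exact (h1 _).trans (hc n h)
    · rw [Finset.sum_range_succ, if_neg h, add_zero]; exact ih

/-- join of finite strings -/
def jn (x y : BStr) : BStr := (List.range (2 * x.length)).map fun i =>
  if i % 2 = 0 then x.getD (i / 2) false else y.getD (i / 2) false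

lemma comp_jn : Computable₂ jn := by
  have : Primrec (fun z : BStr × BStr => (List.range (2 * z.1.length)).map fun i =>
      if i % 2 = 0 then z.1.getD (i / 2) false else z.2.getD (i / 2) false) := by
    refine Primrec.list_map (Primrec.list_range.comp (Primrec.nat_mul.comp (Primrec.const 2)
      (Primrec.list_length.comp Primrec.fst))) ?_
    have hi : Primrec (fun z : (BStr × BStr) × ℕ => z.2 / 2) :=
      Primrec.nat_div.comp Primrec.snd (Primrec.const 2)
    exact Primrec.ite (Primrec.eq.comp (Primrec.nat_mod.comp Primrec.snd (Primrec.const 2))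
      (Primrec.const 0))
      ((Primrec.list_getD false).comp (Primrec.fst.comp Primrec.fst) hi)
      ((Primrec.list_getD false).comp (Primrec.snd.comp Primrec.fst) hi)
  exact this.to_comp

lemma exists_min_desc {U : BStr →. BStr} (h : ∀ x, ∃ q, x ∈ U q) (x : BStr) :
    ∃ q : BStr, q.length = cpx U x ∧ x ∈ U q := by
  have hne : {n | ∃ q : BStr, q.length = n ∧ x ∈ U q}.Nonempty := by
    obtain ⟨q, hq⟩ := h x
    exact ⟨q.length, q, rfl, hq⟩
  exact Nat.sInf_mem hne

lemma total {U : BStr →. BStr} (hU : UniversalPrefixFree U) (x : BStr) : ∃ q, x ∈ U q := by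
  let f : ℕ → Option (ℕ × BStr) := fun i =>
    (Encodable.decode (α := BStr) i).map fun x => (i + 1, x)
  have hf : Computable f := Computable.option_map Computable.decode
    ((Computable.succ.comp Computable.fst).pair Computable.snd).to₂
  obtain ⟨c, hc⟩ := machine_exists hU f hf (fun s => by
    have : ∀ s, ps (fun i => (f i).map Prod.fst) s ≤ 1 - (2 : ℝ)⁻¹ ^ s := by
      intro s
      induction s with
      | zero => simp [ps]
      | succ s ih =>
        rw [ps_succ]
        have : wt ((f s).map Prod.fst) ≤ (2 : ℝ)⁻¹ ^ (s + 1) := by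
          simp only [f]
          cases Encodable.decode (α := BStr) s
          · simp [wt]
          · simp [wt]
        rw [pow_succ] at this ⊢
        linarith
    have h2 : (0 : ℝ) < (2 : ℝ)⁻¹ ^ s := by positivity
    linarith [this s])
  obtain ⟨q, _, hq⟩ := hc (Encodable.encode x) _ x (by simp [f]; rfl)
  exact ⟨q, hq⟩

lemma cpx_comp {U : BStr →. BStr} (hU : UniversalPrefixFree U) {g : BStr → BStr}
    (hg : Computable g) : ∃ c, ∀ x, cpx U (g x) ≤ cpx U x + c := by
  obtain ⟨c, hc⟩ := hU.2.2 (fun p => (U p).map g) (hU.1.map (hg.comp Computable.snd).to₂)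
    (fun p q hp hq hpq => hU.2.1 p q hp hq hpq)
  refine ⟨c, fun x => ?_⟩
  obtain ⟨p, hp, hx⟩ := exists_min_desc (total hU) x
  obtain ⟨q, hq, hx'⟩ := hc p (g x) (Part.mem_map g hx)
  have := cpx_le hx'
  omega

theorem cpx_jn {U : BStr →. BStr} (hU : UniversalPrefixFree U)
    (hlen : ∀ x : BStr, cpxN U x.length ≤ cpx U x) :
    ∃ c, ∀ x y : BStr, x.length = y.length →
      cpx U (jn x y) + cpxN U x.length ≤ cpx U x + cpx U y + c := by
  obtain ⟨e, he⟩ := exists_enum hU.1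
  obtain ⟨C, hC⟩ := coding hU he
  have hG := comp_G he.comp
  let R : ℕ → ℕ → ℕ → Option (ℕ × BStr) := fun s0 s1 s2 =>
    (e s0).bind fun z => (e s1).bind fun u => (e s2).bind fun v =>
      if (u.2.length = z.2.length ∧ v.2.length = z.2.length) ∧
        (tr (G e z.2.length) C (s1 + 1) z.1.length ∧ tr (G e z.2.length) C (s2 + 1) z.1.length)
      then some (u.1.length + v.1.length - z.1.length + 2 * C, jn u.2 v.2) else none
  let f : ℕ → Option (ℕ × BStr) := fun i =>
    R i.unpair.1 i.unpair.2.unpair.1 i.unpair.2.unpair.2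
  have hf : Computable f := by
    have m1 : Computable (fun i : ℕ => i.unpair.1) := Computable.fst.comp Computable.unpair
    have m2 : Computable (fun i : ℕ => i.unpair.2) := Computable.snd.comp Computable.unpair
    have k1 : Computable (fun i : ℕ => i.unpair.2.unpair.1) := m1.comp m2
    have s1 : Computable (fun i : ℕ => i.unpair.2.unpair.2) := m2.comp m2
    refine Computable.option_bind (he.comp.comp m1) ?_
    refine Computable.option_bind (he.comp.comp (k1.comp Computable.fst)) ?_
    refine Computable.option_bind (he.comp.comp (s1.comp (Computable.fst.comp Computable.fst))) ?_
    have hi : Computable (fun w : ((ℕ × (BStr × BStr)) × (BStr × BStr)) × (BStr × BStr) =>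
      w.1.1.1) := Computable.fst.comp (Computable.fst.comp Computable.fst)
    have hz : Computable (fun w : ((ℕ × (BStr × BStr)) × (BStr × BStr)) × (BStr × BStr) =>
      w.1.1.2) := Computable.snd.comp (Computable.fst.comp Computable.fst)
    have hu : Computable (fun w : ((ℕ × (BStr × BStr)) × (BStr × BStr)) × (BStr × BStr) =>
      w.1.2) := Computable.snd.comp Computable.fst
    have lz1 : Computable (fun w : ((ℕ × (BStr × BStr)) × (BStr × BStr)) × (BStr × BStr) =>
      w.1.1.2.1.length) := Computable.list_length.comp (Computable.fst.comp hz)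
    have lz2 : Computable (fun w : ((ℕ × (BStr × BStr)) × (BStr × BStr)) × (BStr × BStr) =>
      w.1.1.2.2.length) := Computable.list_length.comp (Computable.snd.comp hz)
    have lu1 : Computable (fun w : ((ℕ × (BStr × BStr)) × (BStr × BStr)) × (BStr × BStr) =>
      w.1.2.1.length) := Computable.list_length.comp (Computable.fst.comp hu)
    have lu2 : Computable (fun w : ((ℕ × (BStr × BStr)) × (BStr × BStr)) × (BStr × BStr) =>
      w.1.2.2.length) := Computable.list_length.comp (Computable.snd.comp hu)
    have lv1 : Computable (fun w : ((ℕ × (BStr × BStr)) × (BStr × BStr)) × (BStr × BStr) =>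
      w.2.1.length) := Computable.list_length.comp (Computable.fst.comp Computable.snd)
    have lv2 : Computable (fun w : ((ℕ × (BStr × BStr)) × (BStr × BStr)) × (BStr × BStr) =>
      w.2.2.length) := Computable.list_length.comp (Computable.snd.comp Computable.snd)
    have n1 : Computable (fun w : ((ℕ × (BStr × BStr)) × (BStr × BStr)) × (BStr × BStr) =>
      w.1.1.1.unpair.2.unpair.1 + 1) := Computable.succ.comp (k1.comp hi)
    have n2 : Computable (fun w : ((ℕ × (BStr × BStr)) × (BStr × BStr)) × (BStr × BStr) =>
      w.1.1.1.unpair.2.unpair.2 + 1) := Computable.succ.comp (s1.comp hi)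
    have t1 := comp_tr hG C lz2 n1 lz1
    have t2 := comp_tr hG C lz2 n2 lz1
    have o1 := comp_add (comp_sub (comp_add lu1 lv1) lz1) (Computable.const (2 * C))
    have o2 : Computable (fun w : ((ℕ × (BStr × BStr)) × (BStr × BStr)) × (BStr × BStr) =>
      jn w.1.2.2 w.2.2) := comp_jn.comp (Computable.snd.comp hu)
        (Computable.snd.comp Computable.snd)
    have d := comp_and (comp_and (comp_eq lu2 lz2) (comp_eq lv2 lz2)) (comp_and t1 t2)
    have o := Computable.option_some.comp (o1.pair o2)
    exact comp_ite d o (Computable.const none)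
  have hsum : ∀ s0, ∑' s1, ∑' s2, wtE ((R s0 s1 s2).map Prod.fst) ≤
      wtE ((e s0).map fun y => y.1.length) := by
    intro s0
    cases h0 : e s0 with
    | none => simp [R, h0, wtE, wt]
    | some z =>
      set m := z.2.length
      set k := z.1.length
      let a : ℕ → ℝ≥0∞ := fun s => if tr (G e m) C (s + 1) k then wtE (G e m s) else 0
      let D : ℝ≥0∞ := ENNReal.ofReal (2 ^ k * (2 : ℝ)⁻¹ ^ (2 * C))
      have hb : ∀ s1 s2, wtE ((R s0 s1 s2).map Prod.fst) ≤ D * (a s1 * a s2) := by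
        intro s1 s2
        cases h1 : e s1 with
        | none => simp [R, h0, h1, wtE, wt]
        | some u =>
        cases h2 : e s2 with
        | none => simp [R, h0, h1, h2, wtE, wt]
        | some v =>
        by_cases hc : (u.2.length = m ∧ v.2.length = m) ∧
            (tr (G e m) C (s1 + 1) k ∧ tr (G e m) C (s2 + 1) k)
        · have e1 : R s0 s1 s2 = some (u.1.length + v.1.length - k + 2 * C, jn u.2 v.2) := by
            simp only [R, h0, h1, h2, Option.bind_some]
            exact if_pos hc
          have e2 : a s1 = ENNReal.ofReal ((2 : ℝ)⁻¹ ^ u.1.length) := by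
            simp only [a]
            rw [if_pos hc.2.1]
            simp only [G, h1, Option.bind_some]
            rw [if_pos hc.1.1]
            rfl
          have e3 : a s2 = ENNReal.ofReal ((2 : ℝ)⁻¹ ^ v.1.length) := by
            simp only [a]
            rw [if_pos hc.2.2]
            simp only [G, h2, Option.bind_some]
            rw [if_pos hc.1.2]
            rfl
          rw [e1, e2, e3, ← ENNReal.ofReal_mul (by positivity), ← ENNReal.ofReal_mul (by positivity)]
          simp only [Option.map_some, wtE, wt]
          refine ENNReal.ofReal_le_ofReal ?_
          have e4 : (2 : ℝ) ^ k * (2 : ℝ)⁻¹ ^ k = 1 := by rw [← mul_pow]; simp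
          have e5 : (2 : ℝ)⁻¹ ^ (u.1.length + v.1.length - k) =
              2 ^ k * (2 : ℝ)⁻¹ ^ (k + (u.1.length + v.1.length - k)) := by
            rw [pow_add, ← mul_assoc, e4, one_mul]
          have e6 : (2 : ℝ)⁻¹ ^ (k + (u.1.length + v.1.length - k)) ≤
              (2 : ℝ)⁻¹ ^ (u.1.length + v.1.length) :=
            pow_le_pow_of_le_one (by norm_num) (by norm_num) (by omega)
          calc (2 : ℝ)⁻¹ ^ (u.1.length + v.1.length - k + 2 * C)
              = (2 ^ k * (2 : ℝ)⁻¹ ^ (k + (u.1.length + v.1.length - k))) *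
                (2 : ℝ)⁻¹ ^ (2 * C) := by rw [pow_add, e5]
            _ ≤ (2 ^ k * (2 : ℝ)⁻¹ ^ (u.1.length + v.1.length)) * (2 : ℝ)⁻¹ ^ (2 * C) := by
              gcongr
            _ = _ := by rw [pow_add]; ring
        · have e1 : R s0 s1 s2 = none := by
            simp only [R, h0, h1, h2, Option.bind_some]
            exact if_neg hc
          simp [e1, wtE, wt]
      have hB : ∑' s, a s ≤ ENNReal.ofReal (2 ^ C * (2 : ℝ)⁻¹ ^ k) := by
        refine tsum_trunc _ _ _ fun s hs => ?_
        rw [sum_wtE]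
        exact ENNReal.ofReal_le_ofReal ((tr_iff _ _ _ _).1 hs)
      calc ∑' s1, ∑' s2, wtE ((R s0 s1 s2).map Prod.fst)
          ≤ ∑' s1, ∑' s2, D * (a s1 * a s2) :=
            ENNReal.tsum_le_tsum fun s1 => ENNReal.tsum_le_tsum fun s2 => hb s1 s2
        _ = D * ((∑' s1, a s1) * ∑' s2, a s2) := by
            simp only [ENNReal.tsum_mul_left, ENNReal.tsum_mul_right]
        _ ≤ D * (ENNReal.ofReal (2 ^ C * (2 : ℝ)⁻¹ ^ k) *
              ENNReal.ofReal (2 ^ C * (2 : ℝ)⁻¹ ^ k)) := by gcongr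
        _ = ENNReal.ofReal ((2 : ℝ)⁻¹ ^ k) := by
            rw [← ENNReal.ofReal_mul (by positivity), ← ENNReal.ofReal_mul (by positivity)]
            congr 1
            have e4 : (2 : ℝ) ^ k * (2 : ℝ)⁻¹ ^ k = 1 := by rw [← mul_pow]; simp
            have e5 : (2 : ℝ) ^ (2 * C) * (2 : ℝ)⁻¹ ^ (2 * C) = 1 := by rw [← mul_pow]; simp
            calc _ = ((2 : ℝ) ^ k * (2 : ℝ)⁻¹ ^ k) * ((2 : ℝ) ^ (2 * C) * (2 : ℝ)⁻¹ ^ (2 * C)) *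
                  (2 : ℝ)⁻¹ ^ k := by ring
              _ = _ := by rw [e4, e5]; ring
        _ = _ := by simp [wtE, wt, k]
  obtain ⟨c, hc⟩ := machine_exists hU f hf (ps_le_one (by
    have := tsum_unpair3 fun m k s => wtE ((R m k s).map Prod.fst)
    exact (le_of_eq this).trans ((ENNReal.tsum_le_tsum hsum).trans (kraft_enum hU.2.1 he))))
  refine ⟨2 * C + c, fun x y hxy => ?_⟩
  obtain ⟨q, hq1, hq2⟩ := exists_min_desc (total hU) (numStr x.length)
  obtain ⟨u, hu1, hu2⟩ := exists_min_desc (total hU) x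
  obtain ⟨v, hv1, hv2⟩ := exists_min_desc (total hU) y
  obtain ⟨s0, h0⟩ := he.complete _ _ hq2
  obtain ⟨s1, h1⟩ := he.complete _ _ hu2
  obtain ⟨s2, h2⟩ := he.complete _ _ hv2
  have hl : (numStr x.length).length = x.length := by simp [numStr]
  have htr : ∀ s, tr (G e (numStr x.length).length) C s q.length := by
    intro s
    rw [tr_iff, hl, hq1]
    have h3 := (ENNReal.sum_le_tsum (Finset.range s)).trans (hC x.length)
    rw [sum_wtE] at h3
    exact (ENNReal.ofReal_le_ofReal_iff (by positivity)).1 h3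
  obtain ⟨p, hp1, hp2⟩ := hc (Nat.pair s0 (Nat.pair s1 s2))
    (u.length + v.length - q.length + 2 * C) (jn x y) (by
      simp only [f, R, Nat.unpair_pair, h0, h1, h2, Option.bind_some]
      exact if_pos ⟨⟨hl.symm, by rw [hl, hxy]⟩, htr _, htr _⟩)
  have h4 := cpx_le hp2
  have h5 := hlen x
  have h6 : cpxN U x.length = q.length := hq1.symm
  omega

lemma seg_eq (Z : Cantor) (n : ℕ) : seg Z n = (List.range n).map Z := by
  apply List.ext_getElem <;> simp [seg]

lemma seg_join (A B : Cantor) (m : ℕ) : seg (join (A, B)) (2 * m) = jn (seg A m) (seg B m) := by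
  have hl : ∀ Z : Cantor, (seg Z m).length = m := fun Z => by simp [seg]
  rw [seg_eq, jn, hl]
  refine List.map_congr_left fun i hi => ?_
  have hi' : i / 2 < m := by have := List.mem_range.1 hi; omega
  have hg : ∀ Z : Cantor, (seg Z m).getD (i / 2) false = Z (i / 2) := fun Z => by
    rw [List.getD_eq_getElem _ _ (by rw [hl]; exact hi')]
    simp [seg]
  rw [hg, hg, _root_.join]

lemma avg_eq (U : BStr →. BStr) (μ : Measure Cantor) [IsProbabilityMeasure μ] (n : ℕ) :
    Integrable (fun Z => (cpx U (seg Z n) : ℝ)) μ ∧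
    avgCpx U μ n = ∫ Z, (cpx U (seg Z n) : ℝ) ∂μ := by
  let π : Cantor → (Fin n → Bool) := fun Z i => Z i.1
  have hπ : Measurable π := measurable_pi_lambda _ fun i => measurable_pi_apply _
  let F : (Fin n → Bool) → ℝ := fun v => (cpx U (List.ofFn v) : ℝ)
  have : IsProbabilityMeasure (μ.map π) := Measure.isProbabilityMeasure_map hπ.aemeasurable
  have hF : Integrable F (μ.map π) := Integrable.of_finite
  refine ⟨hF.comp_measurable hπ, ?_⟩
  have h1 : ∫ Z, (cpx U (seg Z n) : ℝ) ∂μ = ∫ v, F v ∂(μ.map π) :=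
    (integral_map hπ.aemeasurable hF.aestronglyMeasurable).symm
  rw [h1, integral_fintype hF, avgCpx]
  refine Finset.sum_congr rfl fun v _ => ?_
  have hc : cyl (List.ofFn v) = π ⁻¹' {v} := by
    ext Z
    simp only [cyl, Set.mem_ofPred_eq, Set.mem_preimage, Set.mem_singleton_iff, π]
    constructor
    · intro h
      funext i
      have := h ⟨i.1, by simp⟩
      simpa using this
    · intro h i
      have hi : i.1 < n := by simpa using i.2
      have := congrFun h ⟨i.1, hi⟩
      simpa using this
  rw [smul_eq_mul, mul_comm, measureReal_def, Measure.map_apply hπ (measurableSet_singleton v), hc]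

lemma measurable_join : Measurable _root_.join := by
  refine measurable_pi_lambda _ fun n => ?_
  unfold _root_.join
  by_cases h : n % 2 = 0
  · simp only [h, if_true]
    exact (measurable_pi_apply _).comp measurable_fst
  · simp only [h, if_false]
    exact (measurable_pi_apply _).comp measurable_snd

end KT

/-- if `μ` and `ν` are K-trivial measures, then the pushforward
of `μ × ν` under the join map is K-trivial. -/
theorem product_of_KTrivial_is_KTrivial
    (UK : BStr →. BStr) (hUK : UniversalPrefixFree UK)
    (hlen : ∀ x : BStr, cpxN UK x.length ≤ cpx UK x)
    (μ ν : Measure Cantor) [IsProbabilityMeasure μ] [IsProbabilityMeasure ν]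
    (hμ : MeasTrivial UK μ) (hν : MeasTrivial UK ν) :
    MeasTrivial UK (Measure.map join (μ.prod ν)) := by

  obtain ⟨c1, h1⟩ := hμ
  obtain ⟨c2, h2⟩ := hν
  obtain ⟨c3, h3⟩ := KT.cpx_jn hUK hlen
  obtain ⟨c4, h4⟩ := KT.cpx_comp hUK (g := fun x : BStr => x.reverse.tail.reverse)
    (Primrec.list_reverse.comp (Primrec.list_tail.comp Primrec.list_reverse)).to_comp
  obtain ⟨c5, h5⟩ := KT.cpx_comp hUK
    (g := fun x : BStr => (List.range ((x.length + 1) / 2)).map fun _ => false)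
    (Primrec.list_map (Primrec.list_range.comp (Primrec.nat_div.comp
      (Primrec.succ.comp Primrec.list_length) (Primrec.const 2))) (Primrec.const false).to₂).to_comp
  have hn5 : ∀ n, cpxN UK ((n + 1) / 2) ≤ cpxN UK n + c5 := fun n => by
    have := h5 (numStr n)
    simpa [numStr, cpxN] using this
  have pt : ∀ (A B : Cantor) (n : ℕ), cpx UK (seg (join (A, B)) n) + cpxN UK ((n + 1) / 2) ≤
      cpx UK (seg A ((n + 1) / 2)) + cpx UK (seg B ((n + 1) / 2)) + (c3 + c4) := by
    intro A B n
    set m := (n + 1) / 2 with hm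
    have hl : ∀ Z : Cantor, (seg Z m).length = m := fun Z => by simp [seg]
    have a := h3 (seg A m) (seg B m) (by rw [hl, hl])
    rw [← KT.seg_join, hl] at a
    have b : cpx UK (seg (join (A, B)) n) ≤ cpx UK (seg (join (A, B)) (2 * m)) + c4 := by
      rcases Nat.even_or_odd' n with ⟨k, hk | hk⟩
      · have : 2 * m = n := by omega
        rw [this]; omega
      · have e : 2 * m = n + 1 := by omega
        have := h4 (seg (join (A, B)) (2 * m))
        have e2 : (seg (join (A, B)) (2 * m)).reverse.tail.reverse = seg (join (A, B)) n := by
          rw [e, KT.seg_eq, KT.seg_eq, List.range_succ]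
          simp
        simp only [e2] at this
        exact this
    omega
  refine ⟨c1 + c2 + c3 + c4 + c5, fun n => ?_⟩
  have hP : IsProbabilityMeasure (Measure.map _root_.join (μ.prod ν)) :=
    Measure.isProbabilityMeasure_map KT.measurable_join.aemeasurable
  set m := (n + 1) / 2 with hm
  obtain ⟨iμ, eμ⟩ := KT.avg_eq UK μ m
  obtain ⟨iν, eν⟩ := KT.avg_eq UK ν m
  obtain ⟨iρ, eρ⟩ := KT.avg_eq UK (Measure.map _root_.join (μ.prod ν)) n
  have i1 : Integrable (fun p : Cantor × Cantor => (cpx UK (seg p.1 m) : ℝ)) (μ.prod ν) :=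
    iμ.comp_fst ν
  have i2 : Integrable (fun p : Cantor × Cantor => (cpx UK (seg p.2 m) : ℝ)) (μ.prod ν) :=
    iν.comp_snd μ
  have i3 : Integrable (fun p : Cantor × Cantor => (cpx UK (seg (join p) n) : ℝ)) (μ.prod ν) :=
    iρ.comp_measurable KT.measurable_join
  have key : ∫ p, (cpx UK (seg (join p) n) : ℝ) ∂(μ.prod ν) ≤
      ∫ p : Cantor × Cantor, ((cpx UK (seg p.1 m) : ℝ) + (cpx UK (seg p.2 m) : ℝ)) +
        ((c3 : ℝ) + c4 - cpxN UK m) ∂(μ.prod ν) := by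
    refine integral_mono i3 ((i1.add i2).add (integrable_const _)) fun p => ?_
    have := pt p.1 p.2 n
    have h' : (cpx UK (seg (join p) n) : ℝ) + cpxN UK m ≤
      cpx UK (seg p.1 m) + cpx UK (seg p.2 m) + (c3 + c4) := by exact_mod_cast this
    simp only
    linarith
  have i12 : Integrable (fun p : Cantor × Cantor =>
      (cpx UK (seg p.1 m) : ℝ) + (cpx UK (seg p.2 m) : ℝ)) (μ.prod ν) := i1.add i2
  rw [integral_add i12 (integrable_const _), integral_add i1 i2, integral_const,
    integral_fun_fst (μ := μ) (ν := ν) (fun Z => (cpx UK (seg Z m) : ℝ)),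
    integral_fun_snd (μ := μ) (ν := ν) (fun Z => (cpx UK (seg Z m) : ℝ)), ← eμ, ← eν] at key
  rw [eρ, integral_map KT.measurable_join.aemeasurable iρ.aestronglyMeasurable]
  simp only [probReal_univ, one_smul] at key
  have k1 := h1 m
  have k2 := h2 m
  have k5 : (cpxN UK m : ℝ) ≤ cpxN UK n + c5 := by exact_mod_cast hn5 n
  linarith
end
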